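/- Let a, b, c, d, e ∈ ℂ \ (1/2)ℤ with b+d ∉ (1/2)ℤ, a+b−e ∈ {0,1,…,n−1} and d+e−c ∈ {0,1,…,n−1}. Then the following identity of linear maps V^c → V^a ⊗ V^b ⊗ V^d holds: (Y_e^{a,b} ⊗ id_{V^d}) ∘ Y_c^{e,d} = Σ_f {a b e; d c f}_ξ · (id_{V^a} ⊗ Y_f^{b,d}) ∘ Y_c^{a,f}, where f ranges over the (finitely many) complex numbers with b+d−f ∈ {0,1,…,n−1} and a+f−c ∈ {0,1,…,n−1}. -/

import Mathlib

open Complex Finset Filter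
open scoped Matrix Kronecker Real

noncomputable section

/-- `ξ^a = exp(π √-1 a / n)` for the `2n`-th root of unity `ξ = exp(π √-1/n)`. -/
def xic (n : ℕ) (a : ℂ) : ℂ := Complex.exp (Real.pi * Complex.I * a / n)

/-- `{a} = ξ^a - ξ^{-a}`. -/
def qn (n : ℕ) (a : ℂ) : ℂ := xic n a - xic n (-a)

/-- `{k}! = {1}{2}⋯{k}`. -/
def qfac (n : ℕ) (k : ℕ) : ℂ := ∏ j ∈ Finset.range k, qn n ((j : ℂ) + 1)

-- The quantum binomial `[a¦b]`, defined (and nonzero) only when `a - b ∈ {0,1,…,n-1}`.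
open Classical in
def qbin (n : ℕ) (a b : ℂ) : ℂ :=
  if h : ∃ k : ℕ, k < n ∧ a - b = (k : ℂ) then
    ∏ j ∈ Finset.range h.choose, qn n (a - (j : ℂ)) / qn n (a - b - (j : ℂ))
  else 0

/-- `[a] = {a}/{1}`. -/
def qint (n : ℕ) (a : ℂ) : ℂ := qn n a / qn n 1

/-- `a` is not a half-integer. -/
def NotHalfInt (a : ℂ) : Prop := ∀ m : ℤ, a ≠ (m : ℂ) / 2

/-- `x ∈ {0, 1, …, n-1}` (as a complex number). -/
def InZn (n : ℕ) (x : ℂ) : Prop := ∃ k : ℕ, k < n ∧ x = (k : ℂ)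

/-- The matrix of `E` on `V^a = ℂ^n`: `E e_j = [j] e_{j-1}` (independent of `a`). -/
def Emat (n : ℕ) : Matrix (Fin n) (Fin n) ℂ :=
  Matrix.of fun i j => if (j : ℕ) = (i : ℕ) + 1 then qint n ((j : ℕ) : ℂ) else 0

/-- The matrix of `F` on `V^a`: `F e_j = [2a-j] e_{j+1}` (with `e_n = 0`). -/
def Fmat (n : ℕ) (a : ℂ) : Matrix (Fin n) (Fin n) ℂ :=
  Matrix.of fun i j => if (i : ℕ) = (j : ℕ) + 1 then qint n (2 * a - ((j : ℕ) : ℂ)) else 0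

/-- The matrix of `K` on `V^a`: `K e_j = ξ^{a-j} e_j`. -/
def Kmat (n : ℕ) (a : ℂ) : Matrix (Fin n) (Fin n) ℂ :=
  Matrix.of fun i j => if i = j then xic n (a - ((i : ℕ) : ℂ)) else 0

/-- The matrix of `K⁻¹` on `V^a`. -/
def Kinvmat (n : ℕ) (a : ℂ) : Matrix (Fin n) (Fin n) ℂ :=
  Matrix.of fun i j => if i = j then xic n (-(a - ((i : ℕ) : ℂ))) else 0

/-- The `R`-matrix `R_{a,b} : V^a ⊗ V^b → V^b ⊗ V^a`:
`R(e_u ⊗ e_v) = Σ_m {m}! ξ^{2(a-u)(b-v) - m(a-b-u+v) - m(m+1)/2} [u¦u-m] [2b-v¦2b-v-m]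
e_{v+m} ⊗ e_{u-m}`; the entry at row `(h,k)`, column `(u,v)` is the coefficient of
`e_h ⊗ e_k`, nonzero only when `h + k = u + v` and `h ≥ v` (with `m = h - v`). -/
def Rmat (n : ℕ) (a b : ℂ) : Matrix (Fin n × Fin n) (Fin n × Fin n) ℂ :=
  Matrix.of fun p q =>
    if ((p.1 : ℕ) + (p.2 : ℕ) = (q.1 : ℕ) + (q.2 : ℕ)) ∧ ((q.2 : ℕ) ≤ (p.1 : ℕ)) then
      (fun m : ℕ =>
        qfac n m *
        xic n (2 * (a - ((q.1 : ℕ) : ℂ)) * (b - ((q.2 : ℕ) : ℂ))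
            - (m : ℂ) * (a - b - ((q.1 : ℕ) : ℂ) + ((q.2 : ℕ) : ℂ))
            - (m : ℂ) * ((m : ℂ) + 1) / 2) *
        qbin n ((q.1 : ℕ) : ℂ) (((q.1 : ℕ) : ℂ) - (m : ℂ)) *
        qbin n (2 * b - ((q.2 : ℕ) : ℂ)) (2 * b - ((q.2 : ℕ) : ℂ) - (m : ℂ)))
      ((p.1 : ℕ) - (q.2 : ℕ))
    else 0

/-- The Clebsch-Gordan quantum coefficient `C^{a,b,c}_{u,v,t}`. -/
def CG (n : ℕ) (a b c : ℂ) (u v t : ℕ) : ℂ :=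
  Complex.exp (Real.pi * Complex.I * (c - a - b) / 2) *
  (-1 : ℂ) ^ ((v : ℤ) - (t : ℤ)) *
  xic n (((v : ℂ) * (2 * b - (v : ℂ) + 1) - (u : ℂ) * (2 * a - (u : ℂ) + 1)) / 2) *
  (qbin n (2 * c) (2 * c - (t : ℂ)))⁻¹ *
  qbin n (2 * c) (a + b + c - ((n : ℂ) - 1)) *
  ∑ z ∈ Finset.range (t + 1),
    (-1 : ℂ) ^ z * xic n ((2 * (z : ℂ) - (t : ℂ)) * (2 * c - (t : ℂ) + 1) / 2) *
    qbin n (a + b - c) ((u : ℂ) - (z : ℂ)) *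
    qbin n (2 * a - (u : ℂ) + (z : ℂ)) (2 * a - (u : ℂ)) *
    qbin n (2 * b - (v : ℂ) + ((t : ℂ) - (z : ℂ))) (2 * b - (v : ℂ))

-- The inclusion `Y_c^{a,b} : V^c → V^a ⊗ V^b`.
open Classical in
def Yinc (n : ℕ) (a b c : ℂ) : Matrix (Fin n × Fin n) (Fin n) ℂ :=
  Matrix.of fun p t =>
    if ((p.1 : ℕ) : ℂ) + ((p.2 : ℕ) : ℂ) - ((t : ℕ) : ℂ) = a + b - c then
      CG n a b c (p.1 : ℕ) (p.2 : ℕ) (t : ℕ)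
    else 0

-- The projection `Y_{a,b}^c : V^a ⊗ V^b → V^c`.
open Classical in
def Yproj (n : ℕ) (a b c : ℂ) : Matrix (Fin n) (Fin n × Fin n) ℂ :=
  Matrix.of fun t p =>
    if ((p.1 : ℕ) : ℂ) + ((p.2 : ℕ) : ℂ) - ((t : ℕ) : ℂ) = a + b - c then
      CG n ((n : ℂ) - 1 - b) ((n : ℂ) - 1 - a) ((n : ℂ) - 1 - c)
        (n - 1 - (p.2 : ℕ)) (n - 1 - (p.1 : ℕ)) (n - 1 - (t : ℕ))
    else 0

-- Extracts the natural number `k` with `x = k` (0 if there is none).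
open Classical in
def natIdx (x : ℂ) : ℕ := if h : ∃ k : ℕ, x = (k : ℂ) then h.choose else 0

/-- The `SL(2,ℂ)` quantum 6j-symbol `{a b e; d c f}_ξ`. -/
def sixj (n : ℕ) (a b e d c f : ℂ) : ℂ :=
  (-1 : ℂ) ^ (n - 1 + natIdx (a + f - c)) *
  (qbin n (2 * f + (n : ℂ)) (2 * f + 1))⁻¹ *
  (qfac n (natIdx (d + e - c)) * qfac n (natIdx (a + b - e)) /
    (qfac n (natIdx (b + d - f)) * qfac n (natIdx (a + f - c)))) *
  qbin n (2 * e) (a + b + e + 1 - (n : ℂ)) *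
  (qbin n (2 * e) (e + c - d))⁻¹ *
  ∑ z ∈ Finset.Icc (natIdx (d + e - c) - natIdx (b + d - f))
      (min (natIdx (d + e - c)) (natIdx (a + f - c))),
    (-1 : ℂ) ^ z * qbin n (a + f + c + 1) (2 * c + (z : ℂ) + 1) *
    qbin n ((a + c - f) + (z : ℂ)) (a + c - f) *
    qbin n ((b + f - d) + (d + e - c) - (z : ℂ)) (b + f - d) *
    qbin n ((d + c - e) + (z : ℂ)) (d + f - b)

/-- The tetrahedral symbol `{a b e; d c f}_tet = {a b e; d c f}_ξ · [2f+n¦2f+1]`. -/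
def sixjtet (n : ℕ) (a b e d c f : ℂ) : ℂ :=
  sixj n a b e d c f * qbin n (2 * f + (n : ℂ)) (2 * f + 1)

/-- The Lobachevsky function `Λ(x) = -∫_0^x log|2 sin t| dt`. -/
def lob (x : ℝ) : ℝ := -∫ t in (0 : ℝ)..x, Real.log |2 * Real.sin t|

/-- A triple of integers is admissible. -/
def Admissible (n : ℕ) (i j k : ℤ) : Prop :=
  0 < i ∧ 0 < j ∧ 0 < k ∧ i < (n : ℤ) - 1 ∧ j < (n : ℤ) - 1 ∧ k < (n : ℤ) - 1 ∧
  (n : ℤ) - 1 < i + j + k ∧ i + j + k < 2 * ((n : ℤ) - 1) ∧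
  0 < i + j - k ∧ 0 < j + k - i ∧ 0 < k + i - j ∧
  i + j - k < (n : ℤ) - 1 ∧ j + k - i < (n : ℤ) - 1 ∧ k + i - j < (n : ℤ) - 1


/-- `A ⊗ id` on the third tensor factor, for `A : V^e → V^a ⊗ V^b`. -/
def tensL (n : ℕ) (A : Matrix (Fin n × Fin n) (Fin n) ℂ) :
    Matrix (Fin n × Fin n × Fin n) (Fin n × Fin n) ℂ :=
  Matrix.of fun p q => A (p.1, p.2.1) q.1 * (if p.2.2 = q.2 then 1 else 0)

/-- `id ⊗ A` on the first tensor factor, for `A : V^f → V^b ⊗ V^d`. -/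
def tensR (n : ℕ) (A : Matrix (Fin n × Fin n) (Fin n) ℂ) :
    Matrix (Fin n × Fin n × Fin n) (Fin n × Fin n) ℂ :=
  Matrix.of fun p q => (if p.1 = q.1 then 1 else 0) * A (p.2.1, p.2.2) q.2

/-!
Both sides intertwine the action of `U_ξ(sl₂)` on `V^c` with its action on `V^a ⊗ V^b ⊗ V^d`.
Since `F` generates `V^c` from `e_0`, such a map is determined by the image of `e_0`, which `E`
kills, and a vector killed by `E` is determined by its components along `e_u ⊗ e_0 ⊗ e_w`. On
these components every Clebsch-Gordan sum collapses to one term, so that the theorem becomes a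
scalar identity for a weighted sum over `f` of terminating Racah sums. A Sears transformation of
each Racah sum, itself a consequence of `q`-Saalschütz, moves the dependence on `f` into a
very-well-poised sum, which vanishes unless its order is `0`; a single term survives.
-/

/-! ### Quantum numbers -/

lemma xic_add (n : ℕ) (x y : ℂ) : xic n (x + y) = xic n x * xic n y := by
  rw [xic, xic, xic, ← Complex.exp_add]
  congr 1
  ring

@[simp] lemma xic_zero (n : ℕ) : xic n 0 = 1 := by simp [xic]

lemma xic_neg (n : ℕ) (x : ℂ) : xic n (-x) = (xic n x)⁻¹ :=
  eq_inv_of_mul_eq_one_left (by rw [← xic_add, neg_add_cancel, xic_zero])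

lemma xic_natCast_self (n : ℕ) [NeZero n] : xic n n = -1 := by
  rw [xic, mul_div_cancel_right₀ _ (NeZero.ne _), Complex.exp_pi_mul_I]

@[simp] lemma qn_zero (n : ℕ) : qn n 0 = 0 := by simp [qn]

@[simp] lemma qn_neg (n : ℕ) (x : ℂ) : qn n (-x) = -qn n x := by simp [qn]

lemma qn_add (n : ℕ) (x y : ℂ) :
    qn n (x + y) = xic n (-y) * qn n x + xic n x * qn n y := by
  simp only [qn, neg_add, xic_add]
  ring

lemma qn_add_natCast_self (n : ℕ) [NeZero n] (x : ℂ) : qn n (x + n) = -qn n x := by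
  rw [qn, qn, neg_add, xic_add, xic_add, xic_neg n n, xic_natCast_self]
  norm_num
  ring

lemma qn_natCast_sub (n : ℕ) [NeZero n] (x : ℂ) : qn n (n - x) = qn n x := by
  rw [sub_eq_neg_add, qn_add_natCast_self, qn_neg, neg_neg]

/-- The even companion `ξ^x + ξ^{-x}` of the quantum number `{x}`; it linearises products. -/
def qc (n : ℕ) (x : ℂ) : ℂ := xic n x + xic n (-x)

lemma qc_neg (n : ℕ) (x : ℂ) : qc n (-x) = qc n x := by
  rw [qc, qc, neg_neg, add_comm]

lemma qn_mul (n : ℕ) (x y : ℂ) : qn n x * qn n y = qc n (x + y) - qc n (x - y) := by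
  simp only [qn, qc, sub_eq_add_neg, neg_add, neg_neg, xic_add]
  ring

lemma qn_sub_mul_qn_sub (n : ℕ) (x y z : ℂ) :
    qn n (z - x) * qn n (z - y) = qn n z * qn n (z - x - y) + qn n x * qn n y := by
  simp only [qn_mul]
  rw [← qc_neg n (z - x - (z - y))]
  ring_nf

lemma exists_eq_int_mul_of_qn_eq_zero {n : ℕ} [NeZero n] {x : ℂ} (h : qn n x = 0) :
    ∃ m : ℤ, x = m * n := by
  obtain ⟨m, hm⟩ := Complex.exp_eq_exp_iff_exists_int.1 (sub_eq_zero.1 h)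
  have hn : (n : ℂ) ≠ 0 := NeZero.ne _
  have hπ : (Real.pi : ℂ) ≠ 0 := mod_cast Real.pi_ne_zero
  refine ⟨m, ?_⟩
  field_simp [Complex.I_ne_zero] at hm
  linear_combination hm / 2

lemma qn_ne_zero {n : ℕ} [NeZero n] {x : ℂ} (hx : x ∈ integerComplement) : qn n x ≠ 0 := by
  intro h
  obtain ⟨m, rfl⟩ := exists_eq_int_mul_of_qn_eq_zero h
  exact hx ⟨m * n, by push_cast; ring⟩

lemma qn_natCast_add_one_ne_zero {n m : ℕ} (hm : m + 1 < n) : qn n ((m : ℂ) + 1) ≠ 0 := by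
  have : NeZero n := ⟨by omega⟩
  intro h
  obtain ⟨k, hk⟩ := exists_eq_int_mul_of_qn_eq_zero h
  have hdvd : (n : ℤ) ∣ (m + 1 : ℕ) := ⟨k, by rw [mul_comm]; exact_mod_cast hk⟩
  exact absurd (Nat.le_of_dvd m.succ_pos (mod_cast hdvd)) (by omega)

lemma sub_natCast_mem_integerComplement {x : ℂ} (hx : x ∈ integerComplement) (m : ℕ) :
    x - m ∈ integerComplement := by
  simpa [sub_eq_add_neg] using (Complex.add_intCast_mem_integerComplement (-m : ℤ)).2 hx

lemma add_natCast_mem_integerComplement {x : ℂ} (hx : x ∈ integerComplement) (m : ℕ) :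
    x + m ∈ integerComplement := by
  simpa using (Complex.add_intCast_mem_integerComplement (m : ℤ)).2 hx

lemma NotHalfInt.two_mul_mem_integerComplement {a : ℂ} (ha : NotHalfInt a) :
    2 * a ∈ integerComplement := by
  rintro ⟨m, hm⟩
  exact ha m (by linear_combination -hm / 2)

@[simp] lemma qfac_zero (n : ℕ) : qfac n 0 = 1 := by simp [qfac]

lemma qfac_succ (n k : ℕ) : qfac n (k + 1) = qfac n k * qn n ((k : ℂ) + 1) := by
  simp [qfac, Finset.prod_range_succ]

lemma qfac_ne_zero {n k : ℕ} (hk : k < n) : qfac n k ≠ 0 :=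
  Finset.prod_ne_zero_iff.2 fun _ hj =>
    qn_natCast_add_one_ne_zero (by rw [Finset.mem_range] at hj; omega)

lemma qfac_eq_zero {n k : ℕ} [NeZero n] (hk : n ≤ k) : qfac n k = 0 := by
  have hn : 0 < n := NeZero.pos n
  refine Finset.prod_eq_zero (Finset.mem_range.2 (by omega : n - 1 < k)) ?_
  have h : qn n (n - 0) = 0 := by rw [qn_natCast_sub, qn_zero]
  rwa [Nat.cast_pred hn, sub_add_cancel, ← sub_zero (n : ℂ)]

/-- The falling product `{x}{x-1}⋯{x-m+1}`, written `{x, x-m}` in the paper. -/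
def fall (n : ℕ) (x : ℂ) (m : ℕ) : ℂ := ∏ i ∈ Finset.range m, qn n (x - i)

@[simp] lemma fall_zero (n : ℕ) (x : ℂ) : fall n x 0 = 1 := by simp [fall]

lemma fall_succ (n : ℕ) (x : ℂ) (m : ℕ) : fall n x (m + 1) = fall n x m * qn n (x - m) :=
  Finset.prod_range_succ _ _

lemma fall_add (n : ℕ) (x : ℂ) (m k : ℕ) :
    fall n x (m + k) = fall n x m * fall n (x - m) k := by
  simp only [fall, Finset.prod_range_add, Nat.cast_add, sub_sub]

lemma fall_succ' (n : ℕ) (x : ℂ) (m : ℕ) : fall n x (m + 1) = qn n x * fall n (x - 1) m := by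
  rw [add_comm m 1, fall_add]
  simp [fall]

lemma fall_reflect (n m : ℕ) {x y : ℂ} (h : x + y = m - 1) :
    fall n x m = (-1) ^ m * fall n y m := by
  induction m generalizing x with
  | zero => simp
  | succ m ih =>
    push_cast at h
    rw [fall_succ', fall_succ, ih (x := x - 1) (by linear_combination h),
      show x = -(y - m) by linear_combination h, qn_neg]
    ring

lemma fall_mul_fall_sub_comm (n : ℕ) (x : ℂ) (m k l : ℕ) :
    fall n x (m + k) * fall n (x - m) l = fall n x (m + l) * fall n (x - m) k := by
  rw [fall_add, fall_add, mul_right_comm]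

lemma fall_ne_zero {n : ℕ} [NeZero n] {x : ℂ} (hx : x ∈ integerComplement) (m : ℕ) :
    fall n x m ≠ 0 :=
  Finset.prod_ne_zero_iff.2 fun j _ => qn_ne_zero (sub_natCast_mem_integerComplement hx j)

lemma fall_natCast_mul_qfac (n k m : ℕ) :
    fall n ((k + m : ℕ) : ℂ) m * qfac n k = qfac n (k + m) := by
  induction m with
  | zero => simp
  | succ m ih =>
    rw [fall_succ', ← add_assoc, qfac_succ, ← ih]
    push_cast
    rw [add_sub_cancel_right]
    ring

lemma fall_natCast_self (n m : ℕ) : fall n (m : ℂ) m = qfac n m := by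
  simpa using fall_natCast_mul_qfac n 0 m

lemma fall_natCast_of_lt (n : ℕ) {k m : ℕ} (h : k < m) : fall n (k : ℂ) m = 0 :=
  Finset.prod_eq_zero (Finset.mem_range.2 h) (by rw [sub_self, qn_zero])

lemma fall_add_natCast_self (n : ℕ) [NeZero n] (x : ℂ) (m : ℕ) :
    fall n (x + n) m = (-1) ^ m * fall n x m := by
  simp_rw [fall, add_sub_right_comm, qn_add_natCast_self, Finset.prod_neg, Finset.card_range]

/-! ### Saalschütz' sum and Sears' transformation -/

lemma sum_antidiagonal_assoc {M : Type*} [AddCommMonoid M] (N : ℕ) (f : ℕ → ℕ → ℕ → M) :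
    ∑ p ∈ antidiagonal N, ∑ q ∈ antidiagonal p.1, f q.1 q.2 p.2 =
      ∑ p ∈ antidiagonal N, ∑ q ∈ antidiagonal p.2, f p.1 q.1 q.2 := by
  simp only [Finset.sum_sigma']
  apply Finset.sum_nbij' (fun ⟨⟨_, r⟩, ⟨k, i⟩⟩ => ⟨(k, i + r), (i, r)⟩)
    (fun ⟨⟨k, _⟩, ⟨i, r⟩⟩ => ⟨(k + i, r), (k, i)⟩) <;> (simp +contextual [add_assoc]; try grind)

lemma qn_natCast_add_mul_fall (n i r : ℕ) (C : ℂ) :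
    qn n (i + r) * fall n (C - i) r =
      qn n r * (qn n (C - 2 * i - r + 1) * fall n (C - i) (r - 1)) +
        qn n i * fall n (C - i + 1) r := by
  cases r with
  | zero => simp
  | succ r =>
    have key : qn n (i + (r + 1)) * qn n (C - i - r) =
        qn n (r + 1) * qn n (C - 2 * i - r) + qn n i * qn n (C - i + 1) := by
      simp only [qn_mul]
      rw [← qc_neg n (i - (C - i + 1))]
      ring_nf
    rw [Nat.add_sub_cancel, fall_succ, fall_succ' n (C - i + 1), add_sub_cancel_right]
    push_cast
    rw [show C - 2 * i - (r + 1) + 1 = C - 2 * i - r by ring]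
    linear_combination fall n (C - i) r * key

/-- Saalschütz' sum: the `q`-analogue of the summation of a balanced terminating `₃F₂`. -/
theorem sum_saalschutz {n N : ℕ} (hN : N < n) (A B C : ℂ) :
    ∑ p ∈ antidiagonal N, fall n A p.1 * fall n B p.1 * fall n (C - p.1) p.2 *
        fall n (C - A - B) p.2 / (qfac n p.1 * qfac n p.2) =
      fall n (C - A) N * fall n (C - B) N / qfac n N := by
  induction N with
  | zero => simp
  | succ N ih =>
    let w (i r : ℕ) : ℂ := fall n A i * fall n B i * fall n (C - A - B) r / (qfac n i * qfac n r)
    let g (i r : ℕ) : ℂ :=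
      w i r * (qn n r * (qn n (C - 2 * i - r + 1) * fall n (C - i) (r - 1)))
    let h (i r : ℕ) : ℂ := w i r * (qn n i * fall n (C - i + 1) r)
    have hN0 := qn_natCast_add_one_ne_zero hN
    rw [fall_succ, fall_succ, qfac_succ, ← div_div, eq_div_iff hN0, mul_mul_mul_comm,
      mul_div_right_comm, ← ih (by omega), Finset.sum_mul, Finset.sum_mul]
    calc
      _ = ∑ p ∈ antidiagonal (N + 1), (g p.1 p.2 + h p.1 p.2) := by
        refine Finset.sum_congr rfl fun p hp => ?_
        have hp' : (N : ℂ) + 1 = p.1 + p.2 := mod_cast (mem_antidiagonal.1 hp).symm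
        rw [hp']
        linear_combination w p.1 p.2 * qn_natCast_add_mul_fall n p.1 p.2 C
      _ = ∑ p ∈ antidiagonal N, (g p.1 (p.2 + 1) + h (p.1 + 1) p.2) := by
        rw [Finset.sum_add_distrib, Finset.Nat.sum_antidiagonal_succ',
          Finset.Nat.sum_antidiagonal_succ, Finset.sum_add_distrib]
        simp [g, h]
      _ = _ := by
        refine Finset.sum_congr rfl fun ⟨i, r⟩ hp => ?_
        obtain rfl : i + r = N := mem_antidiagonal.1 hp
        have hi := qn_natCast_add_one_ne_zero (n := n) (m := i) (by omega)
        have hr := qn_natCast_add_one_ne_zero (n := n) (m := r) (by omega)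
        have key := qn_sub_mul_qn_sub n (A - i) (B - i) (C - i - (i + r : ℕ))
        simp only [g, h, w, fall_succ, qfac_succ, Nat.add_sub_cancel]
        push_cast at key ⊢
        rw [show C - i - (i + r) - (A - i) = C - A - (i + r) by ring,
          show C - i - (i + r) - (B - i) = C - B - (i + r) by ring,
          show C - A - (i + r) - (B - i) = C - A - B - r by ring] at key
        rw [key, show C - 2 * i - (r + 1) + 1 = C - i - (i + r) by ring,
          show C - (i + 1) + 1 = C - i by ring]
        field_simp

lemma sum_saalschutz_alternating {n N : ℕ} (hN : N < n) {A B C D : ℂ}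
    (h : C + D = A + B + N - 1) :
    ∑ p ∈ antidiagonal N, (-1) ^ p.1 * fall n A p.1 * fall n B p.1 * fall n (C - p.1) p.2 *
        fall n (D - p.1) p.2 / (qfac n p.1 * qfac n p.2) =
      fall n (C - A) N * fall n (D - A) N / qfac n N := by
  rw [fall_reflect n N (show D - A + (C - B) = N - 1 by linear_combination h), mul_left_comm,
    mul_div_assoc, ← sum_saalschutz hN, Finset.mul_sum]
  refine Finset.sum_congr rfl fun ⟨i, r⟩ hp => ?_
  obtain rfl : i + r = N := mem_antidiagonal.1 hp
  push_cast at h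
  rw [fall_reflect n r (show D - i + (C - A - B) = r - 1 by linear_combination h)]
  ring

/-- Sears' transformation: the `q`-analogue of Whipple's transformation of a balanced terminating
`₄F₃`. -/
theorem sum_sears {n N : ℕ} (hN : N < n) {A B C D E F : ℂ} (h : D + E + F = A + B + C + N - 1) :
    ∑ p ∈ antidiagonal N, (-1) ^ p.1 * fall n A p.1 * fall n B p.1 * fall n C p.1 *
        fall n (D - p.1) p.2 * fall n (E - p.1) p.2 * fall n (F - p.1) p.2 /
        (qfac n p.1 * qfac n p.2) =
      ∑ p ∈ antidiagonal N, (-1) ^ p.1 * fall n A p.1 * fall n (D - B) p.1 * fall n (D - C) p.1 *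
        fall n (D - p.1) p.2 * fall n (E - A) p.2 * fall n (F - A) p.2 /
        (qfac n p.1 * qfac n p.2) := by
  let T (k i r : ℕ) : ℂ :=
    ((-1) ^ (k + i) * fall n A (k + i) * fall n (D - (k + i : ℕ)) r * fall n (E - (k + i : ℕ)) r *
        fall n (F - (k + i : ℕ)) r / qfac n r) *
      (fall n (D - B) k * fall n (D - C) k * fall n (D - k) i * fall n (B + C - D) i /
        (qfac n k * qfac n i))
  calc
    _ = ∑ p ∈ antidiagonal N, ∑ q ∈ antidiagonal p.1, T q.1 q.2 p.2 := by
      refine Finset.sum_congr rfl fun ⟨y, r⟩ hp => ?_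
      obtain rfl : y + r = N := mem_antidiagonal.1 hp
      have hs := sum_saalschutz (n := n) (N := y) (by omega) (D - B) (D - C) D
      rw [show D - (D - B) - (D - C) = B + C - D by ring, sub_sub_cancel, sub_sub_cancel] at hs
      rw [Finset.sum_congr rfl fun q hq => by simp only [T, mem_antidiagonal.1 hq]; rfl,
        ← Finset.mul_sum, hs]
      ring
    _ = ∑ p ∈ antidiagonal N, ∑ q ∈ antidiagonal p.2, T p.1 q.1 q.2 := sum_antidiagonal_assoc N T
    _ = _ := by
      refine Finset.sum_congr rfl fun ⟨k, s⟩ hp => ?_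
      obtain rfl : k + s = N := mem_antidiagonal.1 hp
      have hs := sum_saalschutz_alternating (n := n) (N := s) (by omega)
        (A := A - k) (B := B + C - D) (C := E - k) (D := F - k)
        (by push_cast at h; linear_combination h)
      rw [sub_sub_sub_cancel_right, sub_sub_sub_cancel_right] at hs
      have hT (q : ℕ × ℕ) (hq : q ∈ antidiagonal s) : T k q.1 q.2 =
          (-1) ^ k * fall n A k * fall n (D - B) k * fall n (D - C) k * fall n (D - k) s /
            qfac n k *
          ((-1) ^ q.1 * fall n (A - k) q.1 * fall n (B + C - D) q.1 * fall n (E - k - q.1) q.2 *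
            fall n (F - k - q.1) q.2 / (qfac n q.1 * qfac n q.2)) := by
        obtain ⟨i, r⟩ := q
        obtain rfl : i + r = s := mem_antidiagonal.1 hq
        simp only [T, fall_add, pow_add, Nat.cast_add, sub_sub]
        ring
      rw [Finset.sum_congr rfl hT, ← Finset.mul_sum, hs]
      ring

/-! ### The Racah sum -/

/-- The terminating `₄φ₃`-type sum to which the `6j`-symbol with `k₂ = d + e - c`,
`j = b + d - f`, `κ = a + b - e`, `l = 2a - κ`, `β = 2b`, `δ = 2d` reduces after clearing the
binomials. -/
def racahSum (n k₂ j : ℕ) (κ l β δ : ℂ) : ℂ :=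
  ∑ p ∈ antidiagonal j, (-1) ^ p.1 * fall n k₂ p.1 * fall n κ p.2 *
    fall n (l + β + δ - κ - k₂ + 1) p.1 * fall n (l + p.2) (k₂ - p.1) * fall n (β - p.2) p.1 *
    fall n (δ - p.1) p.2 / (qfac n p.1 * qfac n p.2)

/-- The Sears transform of `racahSum`; here `j` enters the numerator only through
`β + δ + 1 - j`, which is what makes sums over `j` tractable. -/
def racahSumDual (n k₂ j : ℕ) (κ l β δ : ℂ) : ℂ :=
  ∑ p ∈ antidiagonal j, (-1) ^ p.1 * fall n k₂ p.1 * fall n (κ + k₂ - p.1) p.2 *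
    fall n (β + δ + 1 - j) p.1 * fall n (l + β - κ - k₂ + p.1) p.1 * fall n l (k₂ - p.1) *
    fall n (δ - p.1) p.2 / (qfac n p.1 * qfac n p.2)

@[fun_prop] lemma continuous_fall (n m : ℕ) : Continuous fun x => fall n x m := by
  unfold fall qn xic
  fun_prop

lemma dense_integerComplement : Dense integerComplement :=
  (Set.countable_range _).dense_compl ℝ

lemma fall_mul_racahSum (n k₂ j : ℕ) (κ l β δ : ℂ) :
    fall n (l + j) j * racahSum n k₂ j κ l β δ = fall n (l + j) k₂ * (-1) ^ j *
      ∑ p ∈ antidiagonal j, (-1) ^ p.1 * fall n k₂ p.1 * fall n (j - 1 - β) p.1 *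
        fall n (l + β + δ - κ - k₂ + 1) p.1 * fall n (δ - p.1) p.2 * fall n (l + j - p.1) p.2 *
        fall n (j - 1 - κ - p.1) p.2 / (qfac n p.1 * qfac n p.2) := by
  rw [racahSum, Finset.mul_sum, Finset.mul_sum]
  refine Finset.sum_congr rfl fun ⟨y, r⟩ hp => ?_
  rcases lt_or_ge k₂ y with hy | hy
  · simp [fall_natCast_of_lt n hy]
  obtain ⟨t, rfl⟩ := Nat.exists_eq_add_of_le hy
  obtain rfl : y + r = j := mem_antidiagonal.1 hp
  have hl := fall_mul_fall_sub_comm n (l + (y + r : ℕ)) y r t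
  simp only [Nat.add_sub_cancel_left]
  push_cast at hl ⊢
  rw [show l + (y + r) - y = l + r by ring] at hl ⊢
  rw [fall_reflect n y (show β - r + (y + r - 1 - β) = y - 1 by ring),
    fall_reflect n r (show κ + (y + r - 1 - κ - y) = r - 1 by ring), pow_add]
  linear_combination (-1) ^ y * (-1) ^ y * (-1) ^ r * fall n (y + t) y *
    fall n (y + r - 1 - κ - y) r * fall n (l + β + δ - κ - (y + t) + 1) y *
    fall n (y + r - 1 - β) y * fall n (δ - y) r / (qfac n y * qfac n r) * hl

lemma fall_mul_racahSumDual (n k₂ j : ℕ) (κ l β δ : ℂ) :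
    fall n (l + j) j * racahSumDual n k₂ j κ l β δ = fall n (l + j) k₂ * (-1) ^ j *
      ∑ p ∈ antidiagonal j, (-1) ^ p.1 * fall n k₂ p.1 * fall n (δ - (j - 1 - β)) p.1 *
        fall n (δ - (l + β + δ - κ - k₂ + 1)) p.1 * fall n (δ - p.1) p.2 *
        fall n (l + j - k₂) p.2 * fall n (j - 1 - κ - k₂) p.2 / (qfac n p.1 * qfac n p.2) := by
  rw [racahSumDual, Finset.mul_sum, Finset.mul_sum]
  refine Finset.sum_congr rfl fun ⟨k, r⟩ hp => ?_
  rcases lt_or_ge k₂ k with hk | hk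
  · simp [fall_natCast_of_lt n hk]
  obtain ⟨t, rfl⟩ := Nat.exists_eq_add_of_le hk
  obtain rfl : k + r = j := mem_antidiagonal.1 hp
  have hl : fall n (l + (k + r : ℕ)) (k + r) * fall n l t =
      fall n (l + (k + r : ℕ)) (k + t) * fall n (l + (k + r : ℕ) - (k + t : ℕ)) r := by
    rw [← fall_add, add_right_comm, fall_add _ _ (k + r), add_sub_cancel_right]
  simp only [Nat.add_sub_cancel_left]
  push_cast at hl ⊢
  rw [show δ - (k + r - 1 - β) = β + δ + 1 - (k + r) by ring,
    fall_reflect n k (show l + β - κ - (k + t) + k + (δ - (l + β + δ - κ - (k + t) + 1)) = k - 1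
      by ring),
    fall_reflect n r (show κ + (k + t) - k + (k + r - 1 - κ - (k + t)) = r - 1 by ring), pow_add]
  linear_combination (-1) ^ k * (-1) ^ k * (-1) ^ r * fall n (k + t) k *
    fall n (β + δ + 1 - (k + r)) k * fall n (δ - (l + β + δ - κ - (k + t) + 1)) k *
    fall n (δ - k) r * fall n (k + r - 1 - κ - (k + t)) r / (qfac n k * qfac n r) * hl

theorem racahSum_eq_racahSumDual {n j : ℕ} [NeZero n] (hj : j < n) (k₂ : ℕ) (κ l β δ : ℂ) :
    racahSum n k₂ j κ l β δ = racahSumDual n k₂ j κ l β δ := by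
  refine congrFun (Continuous.ext_on (f := fun l => racahSum n k₂ j κ l β δ)
    (g := fun l => racahSumDual n k₂ j κ l β δ) dense_integerComplement ?_ ?_ ?_) l
  · unfold racahSum
    fun_prop
  · unfold racahSumDual
    fun_prop
  · intro l hl
    refine mul_left_cancel₀ (fall_ne_zero (n := n) (add_natCast_mem_integerComplement hl j) j) ?_
    rw [fall_mul_racahSum, fall_mul_racahSumDual, sum_sears hj (by ring)]

lemma qn_mul_qn_sub_div_fall {n i s m : ℕ} [NeZero n] (h : i + s = m + 1) {x : ℂ}
    (hx : x ∈ integerComplement) :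
    qn n (m + 1) * qn n (x - i) / fall n x (m + 2) =
      qn n s / fall n (x - 1) (m + 1) + qn n i / fall n x (m + 1) := by
  have his : (i : ℂ) + s = m + 1 := mod_cast h
  have key : qn n (m + 1) * qn n (x - i) = qn n s * qn n x + qn n i * qn n (x - (m + 1)) := by
    simp only [qn_mul]
    rw [← his, ← qc_neg n (s - x)]
    ring_nf
  have hx₀ := qn_ne_zero (n := n) hx
  have hx₁ := qn_ne_zero (n := n) (sub_natCast_mem_integerComplement hx (m + 1))
  have hs : qn n s / fall n (x - 1) (m + 1) = qn n s * qn n x / fall n x (m + 2) := by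
    rw [fall_succ' n x (m + 1)]
    field_simp
  have hi : qn n i / fall n x (m + 1) = qn n i * qn n (x - (m + 1)) / fall n x (m + 2) := by
    rw [fall_succ n x (m + 1)]
    push_cast at hx₁ ⊢
    field_simp
  rw [hs, hi, key, add_div]

lemma sum_antidiagonal_very_well_poised {n M : ℕ} [NeZero n] (hM : M < n) {Y : ℂ}
    (hY : Y ∈ integerComplement) :
    ∑ p ∈ antidiagonal M, (-1) ^ p.1 * qn n (Y - 2 * p.1) /
      (qfac n p.1 * qfac n p.2 * fall n (Y - p.1) (M + 1)) = if M = 0 then 1 else 0 := by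
  cases M with
  | zero => simp [fall, qn_ne_zero hY]
  | succ N =>
    let g (i s : ℕ) : ℂ :=
      (-1) ^ i * qn n s / (qfac n i * qfac n s * fall n (Y - i - 1) (N + 1))
    let h (i s : ℕ) : ℂ := (-1) ^ i * qn n i / (qfac n i * qfac n s * fall n (Y - i) (N + 1))
    have hN0 := qn_natCast_add_one_ne_zero hM
    rw [if_neg N.succ_ne_zero, ← mul_left_inj' hN0, zero_mul, Finset.sum_mul]
    calc
      _ = ∑ p ∈ antidiagonal (N + 1), (g p.1 p.2 + h p.1 p.2) := by
        refine Finset.sum_congr rfl fun ⟨i, s⟩ hp => ?_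
        have key := qn_mul_qn_sub_div_fall (n := n) (mem_antidiagonal.1 hp)
          (sub_natCast_mem_integerComplement hY i)
        rw [show Y - i - i = Y - 2 * i by ring] at key
        linear_combination (-1) ^ i / (qfac n i * qfac n s) * key
      _ = ∑ p ∈ antidiagonal N, (g p.1 (p.2 + 1) + h (p.1 + 1) p.2) := by
        rw [Finset.sum_add_distrib, Finset.Nat.sum_antidiagonal_succ',
          Finset.Nat.sum_antidiagonal_succ, Finset.sum_add_distrib]
        simp [g, h]
      _ = 0 := by
        refine Finset.sum_eq_zero fun ⟨i, s⟩ hp => ?_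
        have his : i + s = N := mem_antidiagonal.1 hp
        have hi := qn_natCast_add_one_ne_zero (n := n) (m := i) (by omega)
        have hs := qn_natCast_add_one_ne_zero (n := n) (m := s) (by omega)
        simp only [g, h, qfac_succ]
        push_cast
        rw [← sub_sub]
        field_simp
        ring

lemma fall_div_fall_add {n : ℕ} [NeZero n] {x : ℂ} (hx : x ∈ integerComplement) (m k : ℕ) :
    fall n x m / fall n x (m + k) = (fall n (x - m) k)⁻¹ := by
  rw [fall_add, div_mul_cancel_left₀ (fall_ne_zero hx m)]

/-- The coefficient left in front of the `k`-th very-well-poised sum, of order `r`, when the sum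
over `j` of weighted Racah sums is taken first. -/
def poisedCoeff (n k₁ k₂ k r : ℕ) (l β δ : ℂ) : ℂ :=
  fall n k₂ k * qfac n (k₁ + k₂ - k) * fall n (l + β - k₁ - k₂ + k) k * fall n l (k₂ - k) *
    fall n (δ - k) r / qfac n k

lemma qfac_mul_racahSum {n k₁ k₂ j s : ℕ} [NeZero n] (hjn : j < n) (hj : j ≤ k₁ + k₂)
    (l : ℂ) {β δ : ℂ} (hX : β + δ ∈ integerComplement) :
    (-1) ^ j * qn n (β + δ + 1 - 2 * j) * fall n (δ - j) s * qfac n (k₁ + k₂ - j) *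
        racahSum n k₂ j k₁ l β δ / (fall n (β + δ + 1 - j) (j + s + 1) * qfac n s) =
      ∑ q ∈ antidiagonal j, poisedCoeff n k₁ k₂ q.1 (q.2 + s) l β δ *
        ((-1) ^ q.2 * qn n (β + δ + 1 - 2 * q.1 - 2 * q.2) /
          (qfac n q.2 * qfac n s * fall n (β + δ + 1 - 2 * q.1 - q.2) (q.2 + s + 1))) := by
  rw [racahSum_eq_racahSumDual hjn, racahSumDual, Finset.mul_sum, Finset.sum_div]
  refine Finset.sum_congr rfl fun ⟨k, i⟩ hq => ?_
  obtain rfl : k + i = j := mem_antidiagonal.1 hq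
  have hqfac : fall n (k₁ + k₂ - k) i * qfac n (k₁ + k₂ - (k + i)) = qfac n (k₁ + k₂ - k) := by
    rw [show k₁ + k₂ - k = k₁ + k₂ - (k + i) + i by omega, ← fall_natCast_mul_qfac]
    push_cast [Nat.cast_sub hj]
    ring_nf
  have hfall := fall_div_fall_add (n := n)
    (sub_natCast_mem_integerComplement (add_natCast_mem_integerComplement hX 1) (k + i))
    k (i + s + 1)
  have hsign : (-1 : ℂ) ^ (k + i) * (-1) ^ k = (-1) ^ i := by
    rw [add_comm, pow_add, mul_assoc, ← mul_pow]
    simp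
  rw [show k + (i + s + 1) = k + i + s + 1 by ring] at hfall
  simp only [poisedCoeff, ← hqfac, fall_add n (δ - k) i s]
  push_cast at hfall ⊢
  rw [show β + δ + 1 - 2 * k - i = β + δ + 1 - (k + i) - k by ring, sub_sub δ,
    show β + δ + 1 - 2 * k - 2 * i = β + δ + 1 - 2 * (k + i) by ring]
  set x := β + δ + 1 - (k + i)
  linear_combination qn n (β + δ + 1 - 2 * (k + i)) * fall n (δ - (k + i)) s *
    qfac n (k₁ + k₂ - (k + i)) * fall n k₂ k * fall n (k₁ + k₂ - k) i *
    fall n (l + β - k₁ - k₂ + k) k * fall n l (k₂ - k) * fall n (δ - k) i /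
    (qfac n k * qfac n i * qfac n s) *
    (fall n x k / fall n x (k + i + s + 1) * hsign + (-1) ^ i * hfall)

lemma sum_qfac_mul_racahSum {n w k₁ k₂ : ℕ} [NeZero n] (hwn : w < n) (hw : w ≤ k₁ + k₂)
    (l : ℂ) {β δ : ℂ} (hX : β + δ ∈ integerComplement) :
    ∑ p ∈ antidiagonal w, (-1) ^ p.1 * qn n (β + δ + 1 - 2 * p.1) * fall n (δ - p.1) p.2 *
        qfac n (k₁ + k₂ - p.1) * racahSum n k₂ p.1 k₁ l β δ /
        (fall n (β + δ + 1 - p.1) (w + 1) * qfac n p.2) =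
      poisedCoeff n k₁ k₂ w 0 l β δ := by
  let T (k i s : ℕ) : ℂ := poisedCoeff n k₁ k₂ k (i + s) l β δ *
    ((-1) ^ i * qn n (β + δ + 1 - 2 * k - 2 * i) /
      (qfac n i * qfac n s * fall n (β + δ + 1 - 2 * k - i) (i + s + 1)))
  calc
    _ = ∑ p ∈ antidiagonal w, ∑ q ∈ antidiagonal p.1, T q.1 q.2 p.2 := by
      refine Finset.sum_congr rfl fun ⟨j, s⟩ hp => ?_
      obtain rfl : j + s = w := mem_antidiagonal.1 hp
      exact qfac_mul_racahSum (by omega) (by omega) l hX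
    _ = ∑ p ∈ antidiagonal w, ∑ q ∈ antidiagonal p.2, T p.1 q.1 q.2 := sum_antidiagonal_assoc w T
    _ = ∑ p ∈ antidiagonal w,
        poisedCoeff n k₁ k₂ p.1 p.2 l β δ * if p.2 = 0 then 1 else 0 := by
      refine Finset.sum_congr rfl fun ⟨k, M⟩ hp => ?_
      have hkM : k + M = w := mem_antidiagonal.1 hp
      have hY : β + δ + 1 - 2 * k ∈ integerComplement := by
        simpa using
          sub_natCast_mem_integerComplement (add_natCast_mem_integerComplement hX 1) (2 * k)
      rw [← sum_antidiagonal_very_well_poised (n := n) (by omega) hY, Finset.mul_sum]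
      refine Finset.sum_congr rfl fun ⟨i, s⟩ hq => ?_
      simp only [T, mem_antidiagonal.1 hq]
    _ = poisedCoeff n k₁ k₂ w 0 l β δ := by
      rw [Finset.sum_eq_single_of_mem (w, 0) (by simp)]
      · simp
      · rintro ⟨k, M⟩ hp hne
        have hM : M ≠ 0 := by
          rintro rfl
          exact hne (by simpa using hp)
        simp [hM]

/-! ### The `6j`-symbol as a Racah sum -/

/-- The quantum binomial coefficient `{x}{x-1}⋯{x-m+1}/{m}!` for an arbitrary length `m`; the
paper's `[x¦x-m]` when `m < n`. -/
def qchoose (n : ℕ) (x : ℂ) (m : ℕ) : ℂ := fall n x m / qfac n m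

lemma qbin_eq_qchoose {n m : ℕ} {a b : ℂ} (hm : m < n) (h : a - b = m) :
    qbin n a b = qchoose n a m := by
  have hex : ∃ k : ℕ, k < n ∧ a - b = k := ⟨m, hm, h⟩
  have hchoose : (hex.choose : ℂ) = m := hex.choose_spec.2.symm.trans h
  rw [qbin, dif_pos hex, Nat.cast_inj.1 hchoose, Finset.prod_div_distrib, h,
    qchoose, ← fall_natCast_self]
  rfl

lemma natIdx_eq {x : ℂ} {k : ℕ} (h : x = k) : natIdx x = k := by
  have hex : ∃ m : ℕ, x = m := ⟨k, h⟩
  have hspec := hex.choose_spec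
  rw [natIdx, dif_pos hex]
  exact_mod_cast hspec.symm.trans h

lemma qchoose_ne_zero {n m : ℕ} (hm : m < n) {x : ℂ} (hx : x ∈ integerComplement) :
    qchoose n x m ≠ 0 :=
  have : NeZero n := ⟨by omega⟩
  div_ne_zero (fall_ne_zero hx m) (qfac_ne_zero hm)

lemma qfac_mul_qfac_sub {n k : ℕ} (hk : k < n) :
    qfac n k * qfac n (n - 1 - k) = qfac n (n - 1) := by
  have : NeZero n := ⟨by omega⟩
  have hshift := fall_add_natCast_self n (k - n) k
  have hfall := fall_natCast_mul_qfac n (n - 1 - k) k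
  rw [sub_add_cancel, fall_natCast_self] at hshift
  rw [Nat.sub_add_cancel (by omega), Nat.cast_pred (by omega),
    fall_reflect n k (show (n - 1 : ℂ) + (k - n) = k - 1 by ring), ← hshift] at hfall
  exact hfall

lemma qchoose_mul_fall {n k : ℕ} (hk : k < n) (x : ℂ) :
    qchoose n x (n - 1 - k) * fall n (x + 1 + k) k = (-1) ^ k * qfac n k * qchoose n x (n - 1) := by
  have : NeZero n := ⟨by omega⟩
  have hsplit := fall_add n x (n - 1 - k) k
  have hshift := fall_add_natCast_self n (x - (n - 1 - k : ℕ)) k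
  have hcast : ((n - 1 - k : ℕ) : ℂ) = n - 1 - k := by
    push_cast [Nat.cast_sub (show k ≤ n - 1 by omega), Nat.cast_pred (NeZero.pos n)]
    ring
  rw [Nat.sub_add_cancel (by omega)] at hsplit
  rw [show x - (n - 1 - k : ℕ) + n = x + 1 + k by rw [hcast]; ring] at hshift
  have hk0 := qfac_ne_zero hk
  have hnk0 := qfac_ne_zero (show n - 1 - k < n by omega)
  rw [qchoose, qchoose, hshift, hsplit, ← qfac_mul_qfac_sub hk]
  field_simp

lemma racah_summand {n z r y i : ℕ} (hz : z < n) (hr : r < n) (hy : y < n) (hi : i < n)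
    {a b c d e f : ℂ} (habe : a + b - e = r + i) (hdec : d + e - c = z + y)
    (hbdf : b + d - f = y + i) :
    qfac n (r + i) * qfac n (z + y) * fall n (2 * c + 1 + (z + y)) (z + y) *
      ((-1) ^ z * qbin n (a + f + c + 1) (2 * c + z + 1) *
        qbin n (a + c - f + z) (a + c - f) *
        qbin n (b + f - d + (d + e - c) - z) (b + f - d) *
        qbin n (d + c - e + z) (d + f - b)) =
    (-1) ^ (z + y) * fall n (2 * c + 1 + (z + r)) (z + r) *
      ((-1) ^ y * fall n (z + y : ℕ) y * fall n (r + i : ℕ) i *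
        fall n (2 * c + 1 + (z + y)) y * fall n (2 * a - r) z * fall n (2 * b - i) y *
        fall n (2 * d - y) i / (qfac n y * qfac n i)) := by
  rw [qbin_eq_qchoose (m := r) hr (by linear_combination habe + hdec - hbdf),
    qbin_eq_qchoose (m := z) hz (by ring),
    qbin_eq_qchoose (m := y) hy (by linear_combination hdec),
    qbin_eq_qchoose (m := i) hi (by linear_combination hbdf - hdec),
    show a + f + c + 1 = 2 * c + 1 + (z + r) by linear_combination habe + hdec - hbdf,
    show a + c - f + z = 2 * a - r by linear_combination hbdf - habe - hdec,
    show b + f - d + (d + e - c) - z = 2 * b - i by linear_combination hdec - hbdf,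
    show d + c - e + z = 2 * d - y by linear_combination -hdec]
  have hsplit (t : ℕ) : fall n (2 * c + 1 + (z + t)) (z + t) =
      fall n (2 * c + 1 + (z + t)) t * fall n (2 * c + 1 + z) z := by
    rw [add_comm z t, fall_add]
    ring_nf
  have hsign : (-1 : ℂ) ^ y * (-1) ^ y = 1 := by rw [← mul_pow]; simp
  have hr0 := qfac_ne_zero hr
  have hy0 := qfac_ne_zero hy
  have hz0 := qfac_ne_zero hz
  have hi0 := qfac_ne_zero hi
  rw [hsplit, hsplit, ← fall_natCast_mul_qfac n r i, ← fall_natCast_mul_qfac n z y]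
  simp only [qchoose, pow_add]
  field_simp
  linear_combination -(fall n (r + i : ℕ) i * fall n (z + y : ℕ) y *
    fall n (2 * c + 1 + (z + y)) y * fall n (2 * c + 1 + z) z * fall n (2 * c + 1 + (z + r)) r *
    fall n (2 * a - r) z * fall n (2 * b - i) y * fall n (2 * d - y) i) * hsign

lemma sum_qbin_eq_racahSum {n k₁ k₂ k₃ j : ℕ} (h₁ : k₁ < n) (h₂ : k₂ < n) (h₃ : k₃ < n)
    (hj : j < n) (hsum : j + k₃ = k₁ + k₂) {a b c d e f : ℂ} (habe : a + b - e = k₁)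
    (hdec : d + e - c = k₂) (hbdf : b + d - f = j) :
    qfac n k₁ * qfac n k₂ * fall n (2 * c + 1 + k₂) k₂ *
      ∑ z ∈ Finset.Icc (k₂ - j) (min k₂ k₃), (-1) ^ z *
        qbin n (a + f + c + 1) (2 * c + z + 1) * qbin n (a + c - f + z) (a + c - f) *
        qbin n (b + f - d + (d + e - c) - z) (b + f - d) *
        qbin n (d + c - e + z) (d + f - b) =
    (-1) ^ k₂ * fall n (2 * c + 1 + k₃) k₃ *
      racahSum n k₂ j k₁ (2 * a - k₁) (2 * b) (2 * d) := by
  rw [racahSum, Finset.mul_sum, Finset.mul_sum]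
  refine Finset.sum_of_injOn (fun z => (k₂ - z, j + z - k₂)) ?_ ?_ ?_ ?_
  · intro x hx y hy hxy
    simp only [Finset.coe_Icc, Set.mem_Icc, Prod.mk.injEq] at hx hy hxy
    omega
  · intro z hz
    simp only [Finset.coe_Icc, Set.mem_Icc, SetLike.mem_coe,
      HasAntidiagonal.mem_antidiagonal] at hz ⊢
    omega
  · rintro ⟨y, i⟩ hp hnot
    have hyi : y + i = j := mem_antidiagonal.1 hp
    have hlt : k₂ < y ∨ k₁ < i := by
      by_contra! hle
      refine hnot ⟨k₂ - y, ?_, ?_⟩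
      · simp only [Finset.coe_Icc, Set.mem_Icc]
        omega
      · simp only [Prod.mk.injEq]
        omega
    rcases hlt with h | h <;> simp [fall_natCast_of_lt n h]
  · intro z hz
    rw [Finset.mem_Icc] at hz
    obtain ⟨r, rfl⟩ := Nat.exists_eq_add_of_le (show z ≤ k₃ by omega)
    obtain ⟨y, rfl⟩ := Nat.exists_eq_add_of_le (show z ≤ k₂ by omega)
    obtain ⟨i, rfl⟩ := Nat.exists_eq_add_of_le (show y ≤ j by omega)
    obtain rfl : k₁ = r + i := by omega
    push_cast at habe hdec hbdf
    simp only [show z + y - z = y by omega, show y + i + z - (z + y) = i by omega,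
      show z + y - y = z by omega]
    push_cast
    rw [show 2 * a - (r + i) + 2 * b + 2 * d - (r + i) - (z + y) + 1 = 2 * c + 1 + (z + y) by
      linear_combination 2 * habe + 2 * hdec, show 2 * a - (r + i) + i = 2 * a - r by ring]
    exact_mod_cast racah_summand (n := n) (by omega) (by omega) (by omega) (by omega) habe hdec
      hbdf

lemma sixj_eq_racahSum {n k₁ k₂ k₃ j : ℕ} (h₁ : k₁ < n) (h₂ : k₂ < n) (h₃ : k₃ < n)
    (hj : j < n) (hsum : j + k₃ = k₁ + k₂) {a b c d e f : ℂ} (habe : a + b - e = k₁)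
    (hdec : d + e - c = k₂) (hbdf : b + d - f = j) (hc : 2 * c ∈ integerComplement) :
    sixj n a b e d c f = (-1) ^ (k₂ + k₃) * qfac n k₂ * fall n (2 * c + 1 + k₃) k₃ *
      qchoose n (2 * e) (n - 1 - k₁) * racahSum n k₂ j k₁ (2 * a - k₁) (2 * b) (2 * d) /
      (qfac n j * qfac n k₃ * qchoose n (2 * f) (n - 1) * fall n (2 * e) k₂ *
        fall n (2 * c + 1 + k₂) k₂) := by
  have : NeZero n := ⟨by omega⟩
  have hsumC : (j : ℂ) + k₃ = k₁ + k₂ := mod_cast hsum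
  have hafc : a + f - c = k₃ := by linear_combination habe + hdec - hbdf - hsumC
  have hcast : ((n - 1 - k₁ : ℕ) : ℂ) = n - 1 - k₁ := by
    push_cast [Nat.cast_sub (show k₁ ≤ n - 1 by omega), Nat.cast_pred (NeZero.pos n)]
    ring
  have hC := fall_ne_zero (n := n)
    (add_natCast_mem_integerComplement (add_natCast_mem_integerComplement hc 1) k₂) k₂
  have hq₁ := qfac_ne_zero h₁
  have hq₂ := qfac_ne_zero h₂
  rw [Nat.cast_one] at hC
  have hS := eq_div_of_mul_eq (mul_ne_zero (mul_ne_zero hq₁ hq₂) hC) <|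
    (mul_comm _ _).trans (sum_qbin_eq_racahSum h₁ h₂ h₃ hj hsum habe hdec hbdf)
  rw [sixj, natIdx_eq habe, natIdx_eq hdec, natIdx_eq hbdf, natIdx_eq hafc, hS,
    qbin_eq_qchoose (m := n - 1) (a := 2 * f + n) (by omega) (by
      rw [Nat.cast_pred (NeZero.pos n)]; ring),
    qbin_eq_qchoose (m := n - 1 - k₁) (by omega) (by
      rw [hcast]; linear_combination -habe),
    qbin_eq_qchoose (m := k₂) h₂ (by linear_combination hdec),
    show qchoose n (2 * f + n) (n - 1) = (-1) ^ (n - 1) * qchoose n (2 * f) (n - 1) by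
      rw [qchoose, fall_add_natCast_self, qchoose, mul_div_assoc],
    show qchoose n (2 * e) k₂ = fall n (2 * e) k₂ / qfac n k₂ from rfl, pow_add, pow_add]
  field_simp

lemma sixj_mul_qchoose_mul_qchoose {n k₁ k₂ k₃ j : ℕ} (h₁ : k₁ < n) (h₂ : k₂ < n) (h₃ : k₃ < n)
    (hj : j < n) (hsum : j + k₃ = k₁ + k₂) {a b c d e f : ℂ} (habe : a + b - e = k₁)
    (hdec : d + e - c = k₂) (hbdf : b + d - f = j) (hc : 2 * c ∈ integerComplement)
    (hf : 2 * f ∈ integerComplement) :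
    sixj n a b e d c f * (qchoose n (2 * f) (n - 1 - j) * qchoose n (2 * c) (n - 1 - k₃)) =
      (-1) ^ j * qchoose n (2 * e) (n - 1 - k₁) * qchoose n (2 * c) (n - 1 - k₂) *
        racahSum n k₂ j k₁ (2 * a - k₁) (2 * b) (2 * d) /
        (fall n (2 * e) k₂ * fall n (2 * f + 1 + j) j) := by
  have : NeZero n := ⟨by omega⟩
  have hne {x : ℂ} (hx : x ∈ integerComplement) (k : ℕ) : fall n (x + 1 + k) k ≠ 0 := by
    simpa using fall_ne_zero (n := n)
      (add_natCast_mem_integerComplement (add_natCast_mem_integerComplement hx 1) k) k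
  have hF := hne hf j
  have hC₃ := hne hc k₃
  have hf0 := qchoose_ne_zero (show n - 1 < n by omega) hf
  have hq₃ := qfac_ne_zero h₃
  have hqj := qfac_ne_zero hj
  have hsign : (-1 : ℂ) ^ k₃ * (-1) ^ k₃ = 1 := by rw [← mul_pow]; simp
  rw [sixj_eq_racahSum h₁ h₂ h₃ hj hsum habe hdec hbdf hc,
    eq_div_of_mul_eq hF (qchoose_mul_fall hj (2 * f)),
    eq_div_of_mul_eq (hne hc k₂) (qchoose_mul_fall h₂ (2 * c)),
    eq_div_of_mul_eq hC₃ (qchoose_mul_fall h₃ (2 * c)), pow_add]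
  field_simp
  linear_combination qfac n k₂ * qchoose n (2 * e) (n - 1 - k₁) * qchoose n (2 * c) (n - 1) *
    racahSum n k₂ j k₁ (2 * a - k₁) (2 * b) (2 * d) /
    (fall n (2 * e) k₂ * fall n (2 * c + 1 + k₂) k₂) * hsign

/-! ### Representations of the quantum group -/

lemma sub_kronecker {l m p q : Type*} (M N : Matrix l m ℂ) (P : Matrix p q ℂ) :
    (M - N) ⊗ₖ P = M ⊗ₖ P - N ⊗ₖ P :=
  Matrix.ext fun _ _ => sub_mul _ _ _

lemma kronecker_sub {l m p q : Type*} (M : Matrix l m ℂ) (P Q : Matrix p q ℂ) :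
    M ⊗ₖ (P - Q) = M ⊗ₖ P - M ⊗ₖ Q :=
  Matrix.ext fun _ _ => mul_sub _ _ _

/-- A finite-dimensional representation of `U_ξ(sl₂)` in matrix form, with the conventions of the
paper: `Kinv` is the inverse of `K`, and `K²` rather than `K` appears in `[E, F]`. -/
structure QuantumRep (n : ℕ) (ι : Type*) [Fintype ι] [DecidableEq ι] where
  E : Matrix ι ι ℂ
  F : Matrix ι ι ℂ
  K : Matrix ι ι ℂ
  Kinv : Matrix ι ι ℂ
  K_mul_Kinv : K * Kinv = 1
  K_mul_E : K * E = xic n 1 • (E * K)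
  F_mul_K : F * K = xic n 1 • (K * F)
  E_mul_F_sub : E * F - F * E = (qn n 1)⁻¹ • (K * K - Kinv * Kinv)

namespace QuantumRep

variable {n : ℕ} {ι κ μ ν : Type*} [Fintype ι] [DecidableEq ι] [Fintype κ] [DecidableEq κ]
  [Fintype μ] [DecidableEq μ] [Fintype ν] [DecidableEq ν]

lemma Kinv_mul_K (A : QuantumRep n ι) : A.Kinv * A.K = 1 :=
  mul_eq_one_comm.1 A.K_mul_Kinv

lemma E_mul_Kinv (A : QuantumRep n ι) : A.E * A.Kinv = xic n 1 • (A.Kinv * A.E) := by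
  calc
    A.E * A.Kinv = A.Kinv * (A.K * A.E) * A.Kinv := by
      rw [← mul_assoc A.Kinv, A.Kinv_mul_K, one_mul]
    _ = xic n 1 • (A.Kinv * A.E) := by
      rw [A.K_mul_E, mul_smul_comm, smul_mul_assoc, mul_assoc, mul_assoc, A.K_mul_Kinv, mul_one]

lemma Kinv_mul_F (A : QuantumRep n ι) : A.Kinv * A.F = xic n 1 • (A.F * A.Kinv) := by
  calc
    A.Kinv * A.F = A.Kinv * (A.F * A.K) * A.Kinv := by
      rw [mul_assoc, mul_assoc, A.K_mul_Kinv, mul_one]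
    _ = xic n 1 • (A.F * A.Kinv) := by
      rw [A.F_mul_K, mul_smul_comm, smul_mul_assoc, ← mul_assoc A.Kinv, A.Kinv_mul_K, one_mul]

/-- The tensor product of representations, for the coproduct `Δ E = E ⊗ K + K⁻¹ ⊗ E`,
`Δ F = F ⊗ K + K⁻¹ ⊗ F`, `Δ K = K ⊗ K`. -/
def tensor (A : QuantumRep n ι) (B : QuantumRep n κ) : QuantumRep n (ι × κ) where
  E := A.E ⊗ₖ B.K + A.Kinv ⊗ₖ B.E
  F := A.F ⊗ₖ B.K + A.Kinv ⊗ₖ B.F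
  K := A.K ⊗ₖ B.K
  Kinv := A.Kinv ⊗ₖ B.Kinv
  K_mul_Kinv := by
    rw [← Matrix.mul_kronecker_mul, A.K_mul_Kinv, B.K_mul_Kinv, Matrix.one_kronecker_one]
  K_mul_E := by
    simp only [mul_add, add_mul, ← Matrix.mul_kronecker_mul, A.K_mul_E, B.K_mul_E,
      A.K_mul_Kinv, A.Kinv_mul_K, Matrix.smul_kronecker, Matrix.kronecker_smul, smul_add]
  F_mul_K := by
    simp only [mul_add, add_mul, ← Matrix.mul_kronecker_mul, A.F_mul_K, B.F_mul_K,
      A.K_mul_Kinv, A.Kinv_mul_K, Matrix.smul_kronecker, Matrix.kronecker_smul, smul_add]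
  E_mul_F_sub := by
    have hEF : (A.E * A.Kinv) ⊗ₖ (B.K * B.F) = (A.Kinv * A.E) ⊗ₖ (B.F * B.K) := by
      rw [A.E_mul_Kinv, B.F_mul_K, Matrix.smul_kronecker, Matrix.kronecker_smul]
    have hFE : (A.Kinv * A.F) ⊗ₖ (B.E * B.K) = (A.F * A.Kinv) ⊗ₖ (B.K * B.E) := by
      rw [A.Kinv_mul_F, B.K_mul_E, Matrix.smul_kronecker, Matrix.kronecker_smul]
    calc
      _ = (A.E * A.F - A.F * A.E) ⊗ₖ (B.K * B.K) +
          (A.Kinv * A.Kinv) ⊗ₖ (B.E * B.F - B.F * B.E) := by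
        simp only [mul_add, add_mul, ← Matrix.mul_kronecker_mul, hEF, hFE, sub_kronecker,
          kronecker_sub]
        abel
      _ = _ := by
        rw [A.E_mul_F_sub, B.E_mul_F_sub, Matrix.smul_kronecker, Matrix.kronecker_smul,
          ← smul_add, sub_kronecker, kronecker_sub, sub_add_sub_cancel]
        simp only [Matrix.mul_kronecker_mul]

/-- A matrix commuting with the action of `U_ξ(sl₂)`. -/
structure IsIntertwiner (A : QuantumRep n ι) (B : QuantumRep n κ) (M : Matrix κ ι ℂ) : Prop where
  E_mul : B.E * M = M * A.E
  F_mul : B.F * M = M * A.F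
  K_mul : B.K * M = M * A.K

namespace IsIntertwiner

variable {A : QuantumRep n ι} {B : QuantumRep n κ} {C : QuantumRep n μ} {D : QuantumRep n ν}

lemma Kinv_mul_of_K_mul {M : Matrix κ ι ℂ} (hK : B.K * M = M * A.K) :
    B.Kinv * M = M * A.Kinv := by
  calc
    B.Kinv * M = B.Kinv * (M * A.K) * A.Kinv := by
      rw [Matrix.mul_assoc, Matrix.mul_assoc, A.K_mul_Kinv, Matrix.mul_one]
    _ = M * A.Kinv := by
      rw [← hK, ← Matrix.mul_assoc B.Kinv, B.Kinv_mul_K, Matrix.one_mul]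

lemma one (A : QuantumRep n ι) : IsIntertwiner A A 1 := by constructor <;> simp

lemma zero : IsIntertwiner A B 0 := by constructor <;> simp

lemma mul {M : Matrix κ ι ℂ} {N : Matrix μ κ ℂ} (hN : IsIntertwiner B C N)
    (hM : IsIntertwiner A B M) : IsIntertwiner A C (N * M) := by
  constructor
  · rw [← Matrix.mul_assoc, hN.E_mul, Matrix.mul_assoc, hM.E_mul, Matrix.mul_assoc]
  · rw [← Matrix.mul_assoc, hN.F_mul, Matrix.mul_assoc, hM.F_mul, Matrix.mul_assoc]
  · rw [← Matrix.mul_assoc, hN.K_mul, Matrix.mul_assoc, hM.K_mul, Matrix.mul_assoc]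

lemma add {M N : Matrix κ ι ℂ} (hM : IsIntertwiner A B M) (hN : IsIntertwiner A B N) :
    IsIntertwiner A B (M + N) := by
  constructor
  · rw [Matrix.mul_add, Matrix.add_mul, hM.E_mul, hN.E_mul]
  · rw [Matrix.mul_add, Matrix.add_mul, hM.F_mul, hN.F_mul]
  · rw [Matrix.mul_add, Matrix.add_mul, hM.K_mul, hN.K_mul]

lemma smul {M : Matrix κ ι ℂ} (hM : IsIntertwiner A B M) (r : ℂ) :
    IsIntertwiner A B (r • M) := by
  constructor
  · rw [Matrix.mul_smul, Matrix.smul_mul, hM.E_mul]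
  · rw [Matrix.mul_smul, Matrix.smul_mul, hM.F_mul]
  · rw [Matrix.mul_smul, Matrix.smul_mul, hM.K_mul]

lemma sub {M N : Matrix κ ι ℂ} (hM : IsIntertwiner A B M) (hN : IsIntertwiner A B N) :
    IsIntertwiner A B (M - N) := by
  simpa [sub_eq_add_neg] using hM.add (hN.smul (-1))

lemma kronecker {M : Matrix κ ι ℂ} {N : Matrix ν μ ℂ} (hM : IsIntertwiner A B M)
    (hN : IsIntertwiner C D N) : IsIntertwiner (A.tensor C) (B.tensor D) (M ⊗ₖ N) := by
  constructor
  · simp only [tensor, Matrix.add_mul, Matrix.mul_add, ← Matrix.mul_kronecker_mul, hM.E_mul,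
      hN.E_mul, hN.K_mul, Kinv_mul_of_K_mul hM.K_mul]
  · simp only [tensor, Matrix.add_mul, Matrix.mul_add, ← Matrix.mul_kronecker_mul, hM.F_mul,
      hN.F_mul, hN.K_mul, Kinv_mul_of_K_mul hM.K_mul]
  · simp only [tensor, ← Matrix.mul_kronecker_mul, hM.K_mul, hN.K_mul]

lemma assoc {M : Matrix ((ι × κ) × μ) ν ℂ} (hM : IsIntertwiner D ((A.tensor B).tensor C) M) :
    IsIntertwiner D (A.tensor (B.tensor C)) (M.submatrix (Equiv.prodAssoc ι κ μ).symm id) := by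
  have key {X : Matrix ((ι × κ) × μ) ((ι × κ) × μ) ℂ} {Y : Matrix (ι × κ × μ) (ι × κ × μ) ℂ}
      {Z : Matrix ν ν ℂ}
      (hY : Y = X.submatrix (Equiv.prodAssoc ι κ μ).symm (Equiv.prodAssoc ι κ μ).symm)
      (h : X * M = M * Z) : Y * M.submatrix (Equiv.prodAssoc ι κ μ).symm id =
        M.submatrix (Equiv.prodAssoc ι κ μ).symm id * Z := by
    rw [hY, Matrix.submatrix_mul_equiv, h]
    rfl
  refine ⟨key ?_ hM.E_mul, key ?_ hM.F_mul, key ?_ hM.K_mul⟩ <;> ext ⟨i, j, k⟩ ⟨i', j', k'⟩ <;>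
    simp only [tensor, Matrix.add_apply, Matrix.kroneckerMap_apply, Matrix.submatrix_apply,
      Equiv.prodAssoc_symm_apply] <;> ring

end IsIntertwiner

end QuantumRep

lemma sum_Emat_mul {n : ℕ} (i : Fin n) (f : ℕ → ℂ) :
    ∑ k, Emat n i k * f k = qint n (i + 1) * f (i + 1) := by
  have : NeZero n := ⟨i.pos.ne'⟩
  simp only [Emat, Matrix.of_apply, ite_mul, zero_mul]
  rcases Nat.lt_or_ge (i + 1) n with hi | hi
  · rw [Finset.sum_eq_single_of_mem ⟨i + 1, hi⟩ (mem_univ _)]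
    · simp
    · intro k _ hk
      exact if_neg fun h => hk (Fin.ext h)
  · have hin : (i : ℂ) + 1 = n - 0 := by
      rw [sub_zero]
      exact_mod_cast (show (i : ℕ) + 1 = n by omega)
    rw [hin, qint, qn_natCast_sub, qn_zero, zero_div, zero_mul]
    exact Finset.sum_eq_zero fun k _ => if_neg (by omega)

lemma sum_Fmat_mul {n : ℕ} (a : ℂ) (i : Fin n) (f : ℕ → ℂ) :
    ∑ k, Fmat n a i k * f k =
      if (i : ℕ) = 0 then 0 else qint n (2 * a + 1 - i) * f (i - 1) := by
  simp only [Fmat, Matrix.of_apply, ite_mul, zero_mul]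
  split_ifs with hi
  · exact Finset.sum_eq_zero fun k _ => if_neg (by omega)
  · rw [Finset.sum_eq_single_of_mem ⟨i - 1, by omega⟩ (mem_univ _)]
    · rw [if_pos (by simp only; omega), Nat.cast_pred (by omega)]
      ring_nf
    · intro k _ hk
      exact if_neg fun h => hk (Fin.ext (by simp only; omega))

lemma Kmat_eq_diagonal (n : ℕ) (a : ℂ) :
    Kmat n a = Matrix.diagonal fun i : Fin n => xic n (a - (i : ℕ)) := rfl

lemma Kinvmat_eq_diagonal (n : ℕ) (a : ℂ) :
    Kinvmat n a = Matrix.diagonal fun i : Fin n => xic n (-(a - (i : ℕ))) := rfl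

lemma Emat_mul_Fmat (n : ℕ) (a : ℂ) :
    Emat n * Fmat n a =
      Matrix.diagonal fun i : Fin n => qint n ((i : ℕ) + 1) * qint n (2 * a - (i : ℕ)) := by
  ext i j
  rw [Matrix.mul_apply]
  refine (sum_Emat_mul i fun k => if k = j + 1 then qint n (2 * a - j) else 0).trans ?_
  rcases eq_or_ne i j with rfl | hij
  · simp
  · simp [Matrix.diagonal_apply_ne _ hij, Fin.val_ne_of_ne hij]

lemma Fmat_mul_Emat (n : ℕ) (a : ℂ) :
    Fmat n a * Emat n =
      Matrix.diagonal fun i : Fin n => qint n (2 * a + 1 - (i : ℕ)) * qint n (i : ℕ) := by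
  ext i j
  rw [Matrix.mul_apply]
  refine (sum_Fmat_mul a i fun k => if j = k + 1 then qint n (j : ℕ) else 0).trans ?_
  rcases eq_or_ne i j with rfl | hij
  · rw [Matrix.diagonal_apply_eq]
    split_ifs with h₀ h₁
    · simp [qint, h₀]
    · rfl
    · omega
  · rw [Matrix.diagonal_apply_ne _ hij]
    have := Fin.val_ne_of_ne hij
    split_ifs <;> first | rfl | omega | simp

/-- The weight module `V^a` of the statement, as a representation of the quantum group. -/
def weightRep (n : ℕ) (a : ℂ) : QuantumRep n (Fin n) where
  E := Emat n
  F := Fmat n a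
  K := Kmat n a
  Kinv := Kinvmat n a
  K_mul_Kinv := by
    simp [Kmat_eq_diagonal, Kinvmat_eq_diagonal, ← xic_add]
  K_mul_E := by
    ext i j
    rw [Matrix.smul_apply, Kmat_eq_diagonal, Matrix.diagonal_mul, Matrix.mul_diagonal, smul_eq_mul]
    simp only [Emat, Matrix.of_apply]
    split_ifs with h
    · rw [h, mul_left_comm, ← xic_add, mul_comm]
      push_cast
      ring_nf
    · simp
  F_mul_K := by
    ext i j
    rw [Matrix.smul_apply, Kmat_eq_diagonal, Matrix.diagonal_mul, Matrix.mul_diagonal, smul_eq_mul]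
    simp only [Fmat, Matrix.of_apply]
    split_ifs with h
    · rw [h, ← mul_assoc, ← xic_add, mul_comm]
      push_cast
      ring_nf
    · simp
  E_mul_F_sub := by
    rw [Emat_mul_Fmat, Fmat_mul_Emat, Kmat_eq_diagonal, Kinvmat_eq_diagonal,
      Matrix.diagonal_mul_diagonal, Matrix.diagonal_mul_diagonal, Matrix.diagonal_sub,
      Matrix.diagonal_sub, ← Matrix.diagonal_smul]
    congr 1
    funext i
    have key : qn n ((i : ℕ) + 1) * qn n (2 * a - (i : ℕ)) -
        qn n (2 * a + 1 - (i : ℕ)) * qn n (i : ℕ) = qn n 1 * qn n (2 * (a - (i : ℕ))) := by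
      simp only [qn_mul]
      ring_nf
    have hK : qn n (2 * (a - (i : ℕ))) = xic n (a - (i : ℕ)) * xic n (a - (i : ℕ)) -
        xic n (-(a - (i : ℕ))) * xic n (-(a - (i : ℕ))) := by
      rw [qn, two_mul, neg_add, xic_add, xic_add]
    have hq : (qn n 1)⁻¹ * qn n 1 * (qn n 1)⁻¹ = (qn n 1)⁻¹ :=
      by simpa using mul_inv_mul_cancel (qn n 1)⁻¹
    rw [Pi.smul_apply, smul_eq_mul, ← hK]
    simp only [qint, div_eq_mul_inv]
    linear_combination (qn n 1)⁻¹ * (qn n 1)⁻¹ * key + qn n (2 * (a - (i : ℕ))) * hq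

lemma mul_Fmat_apply {κ : Type*} {n t : ℕ} (a : ℂ) (D : Matrix κ (Fin n) ℂ) (p : κ)
    (ht : t + 1 < n) :
    (D * Fmat n a) p ⟨t, t.lt_succ_self.trans ht⟩ = D p ⟨t + 1, ht⟩ * qint n (2 * a - t) := by
  rw [Matrix.mul_apply, Finset.sum_eq_single_of_mem ⟨t + 1, ht⟩ (mem_univ _)]
  · simp [Fmat]
  · intro k _ hk
    have : (k : ℕ) ≠ t + 1 := fun h => hk (Fin.ext h)
    simp [Fmat, this]

lemma eq_zero_of_mul_eq_mul_Fmat {κ : Type*} [Fintype κ] {n : ℕ} [NeZero n] {a : ℂ}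
    (ha : 2 * a ∈ integerComplement) {D : Matrix κ (Fin n) ℂ} {G : Matrix κ κ ℂ}
    (hD : G * D = D * Fmat n a) (h0 : ∀ p, D p 0 = 0) : D = 0 := by
  suffices h : ∀ (t : ℕ) (ht : t < n) (p : κ), D p ⟨t, ht⟩ = 0 from
    Matrix.ext fun p t => h t t.isLt p
  intro t
  induction t with
  | zero => exact fun _ => h0
  | succ t ih =>
    intro ht p
    have hne : qint n (2 * a - t) ≠ 0 := by
      refine div_ne_zero (qn_ne_zero (sub_natCast_mem_integerComplement ha t)) ?_
      simpa using qn_natCast_add_one_ne_zero (n := n) (m := 0) (by omega)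
    refine (mul_eq_zero.1 ?_).resolve_right hne
    rw [← mul_Fmat_apply, ← hD, Matrix.mul_apply]
    exact Finset.sum_eq_zero fun q _ => by rw [ih, mul_zero]

lemma QuantumRep.IsIntertwiner.of_highestWeight {κ : Type*} [Fintype κ] [DecidableEq κ] {n : ℕ}
    [NeZero n] {a : ℂ} (ha : 2 * a ∈ integerComplement) {B : QuantumRep n κ}
    {M : Matrix κ (Fin n) ℂ} (hF : B.F * M = M * Fmat n a) (hK : B.K * M = M * Kmat n a)
    (hE : ∀ p, (B.E * M) p 0 = 0) : IsIntertwiner (weightRep n a) B M := by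
  refine ⟨?_, hF, hK⟩
  have hK' : B.Kinv * M = M * Kinvmat n a := Kinv_mul_of_K_mul (A := weightRep n a) hK
  have hEF : Emat n * Fmat n a - Fmat n a * Emat n =
      (qn n 1)⁻¹ • (Kmat n a * Kmat n a - Kinvmat n a * Kinvmat n a) :=
    (weightRep n a).E_mul_F_sub
  refine sub_eq_zero.1 (eq_zero_of_mul_eq_mul_Fmat ha (G := B.F) ?_ fun p => ?_)
  · have hcomm : (B.E * B.F - B.F * B.E) * M = M * (Emat n * Fmat n a - Fmat n a * Emat n) := by
      rw [B.E_mul_F_sub, hEF, Matrix.smul_mul, Matrix.mul_smul, Matrix.sub_mul, Matrix.mul_sub,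
        Matrix.mul_assoc, Matrix.mul_assoc, hK, hK', ← Matrix.mul_assoc, ← Matrix.mul_assoc, hK,
        hK', Matrix.mul_assoc, Matrix.mul_assoc]
    calc
      B.F * (B.E * M - M * Emat n) = B.F * B.E * M - M * (Fmat n a * Emat n) := by
        rw [Matrix.mul_sub, ← Matrix.mul_assoc, ← Matrix.mul_assoc, hF, Matrix.mul_assoc M]
      _ = B.E * B.F * M - M * (Emat n * Fmat n a) := by
        rw [Matrix.sub_mul, Matrix.mul_sub, sub_eq_sub_iff_add_eq_add] at hcomm
        rw [sub_eq_sub_iff_add_eq_add, add_comm, hcomm, add_comm]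
      _ = (B.E * M - M * Emat n) * Fmat n a := by
        rw [Matrix.sub_mul, Matrix.mul_assoc, Matrix.mul_assoc, Matrix.mul_assoc, hF]
  · rw [Matrix.sub_apply, hE, zero_sub, neg_eq_zero, Matrix.mul_apply]
    exact Finset.sum_eq_zero fun k _ => by simp [weightRep, Emat]

namespace QuantumRep.IsIntertwiner

variable {n : ℕ} {A B C D : QuantumRep n (Fin n)} {M : Matrix (Fin n × Fin n) (Fin n) ℂ}

lemma tensL (hM : IsIntertwiner C (A.tensor B) M) :
    IsIntertwiner (C.tensor D) (A.tensor (B.tensor D)) (tensL n M) := by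
  have h := (hM.kronecker (one D)).assoc
  convert h using 1
  ext ⟨i, j, k⟩ ⟨s, t⟩
  simp [_root_.tensL, Matrix.one_apply]

lemma tensR (hM : IsIntertwiner C (A.tensor B) M) :
    IsIntertwiner (D.tensor C) (D.tensor (A.tensor B)) (tensR n M) := by
  have h := (one D).kronecker hM
  convert h using 1
  ext ⟨i, j, k⟩ ⟨s, t⟩
  simp [_root_.tensR, Matrix.one_apply]

end QuantumRep.IsIntertwiner

/-! ### Clebsch–Gordan maps -/

/-- The exponent `u(2a - u + 1)/2` of the phase attached to `e_u ∈ V^a`. -/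
def wtExp (a u : ℂ) : ℂ := u * (2 * a - u + 1) / 2

/-- The signed phase of the coordinate `cgTerm`, as a function of the numbers `z = u - x` and
`m = v - y` of steps made in the two tensor factors. -/
def cgPhase (n : ℕ) (a b : ℂ) (x y z m : ℕ) : ℂ :=
  (-1) ^ (y + m + z) * xic n (wtExp b (y + m) - wtExp a (x + z) +
    wtExp (a + b - x - y) z - wtExp (a + b - x - y) m)

lemma xic_mul_cgPhase_left (n : ℕ) (a b : ℂ) (x y z m : ℕ) :
    xic n (b - (y + m)) * cgPhase n a b x y z m =
      -(xic n (-m) * cgPhase n a b x y (z + 1) m) := by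
  rw [cgPhase, cgPhase, ← add_assoc (y + m), pow_succ, mul_left_comm, ← xic_add, mul_left_comm,
    ← xic_add, mul_neg_one, neg_mul, neg_neg]
  push_cast
  simp only [wtExp]
  ring_nf

lemma xic_mul_cgPhase_right (n : ℕ) (a b : ℂ) (x y z m : ℕ) :
    xic n (-(a - (x + z))) * cgPhase n a b x y z m =
      -(xic n z * cgPhase n a b x y z (m + 1)) := by
  rw [cgPhase, cgPhase, ← add_assoc y, add_right_comm (y + m) 1, pow_succ, mul_left_comm, ← xic_add,
    mul_left_comm, ← xic_add, mul_neg_one, neg_mul, neg_neg]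
  push_cast
  simp only [wtExp]
  ring_nf

/-- The coordinate at `e_u ⊗ e_v` of the vector obtained from `e_x ⊗ e_y ∈ V^a ⊗ V^b` by applying
`F` repeatedly, up to a factor depending on `u + v` only. -/
def cgTerm (n : ℕ) (a b : ℂ) (x y u v : ℕ) : ℂ :=
  if x ≤ u ∧ y ≤ v then
    cgPhase n a b x y (u - x) (v - y) * qchoose n (2 * a - x) (u - x) *
      qchoose n (2 * b - y) (v - y)
  else 0

lemma cgTerm_add_add (n : ℕ) (a b : ℂ) (x y z m : ℕ) :
    cgTerm n a b x y (x + z) (y + m) =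
      cgPhase n a b x y z m * qchoose n (2 * a - x) z * qchoose n (2 * b - y) m := by
  simp [cgTerm]

lemma qchoose_succ_mul {n m : ℕ} (hm : m + 1 < n) (x : ℂ) :
    qchoose n x (m + 1) * qn n (m + 1) = qchoose n x m * qn n (x - m) := by
  have := qn_natCast_add_one_ne_zero hm
  rw [qchoose, qchoose, fall_succ, qfac_succ]
  field_simp

lemma cgTerm_left {n u : ℕ} (hu : u < n) (a b : ℂ) (x y v : ℕ) :
    (if u = 0 then 0 else qn n (2 * a + 1 - u) * (xic n (b - v) * cgTerm n a b x y (u - 1) v)) =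
      -(xic n (-(v - y)) * qn n (u - x) * cgTerm n a b x y u v) := by
  by_cases h : x ≤ u ∧ y ≤ v
  swap
  · simp [cgTerm, h, show ¬(x ≤ u - 1 ∧ y ≤ v) by omega]
  obtain ⟨z, rfl⟩ := Nat.exists_eq_add_of_le h.1
  obtain ⟨m, rfl⟩ := Nat.exists_eq_add_of_le h.2
  cases z with
  | zero => cases x <;> simp [cgTerm]
  | succ z =>
    have hq := qchoose_succ_mul (n := n) (m := z) (by omega) (2 * a - x)
    have hp := xic_mul_cgPhase_left n a b x y z m
    rw [if_neg (by omega), ← add_assoc, Nat.add_sub_cancel, cgTerm_add_add, add_assoc,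
      cgTerm_add_add]
    push_cast
    rw [add_sub_cancel_left, add_sub_cancel_left,
      show 2 * a + 1 - (x + (z + 1)) = 2 * a - x - z by ring]
    linear_combination
      qn n (2 * a - x - z) * qchoose n (2 * a - x) z * qchoose n (2 * b - y) m * hp +
      xic n (-m) * cgPhase n a b x y (z + 1) m * qchoose n (2 * b - y) m * hq

lemma cgTerm_right {n v : ℕ} (hv : v < n) (a b : ℂ) (x y u : ℕ) :
    xic n (-(a - u)) * (if v = 0 then 0 else qn n (2 * b + 1 - v) * cgTerm n a b x y u (v - 1)) =
      -(xic n (u - x) * qn n (v - y) * cgTerm n a b x y u v) := by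
  by_cases h : x ≤ u ∧ y ≤ v
  swap
  · simp [cgTerm, h, show ¬(x ≤ u ∧ y ≤ v - 1) by omega]
  obtain ⟨z, rfl⟩ := Nat.exists_eq_add_of_le h.1
  obtain ⟨m, rfl⟩ := Nat.exists_eq_add_of_le h.2
  cases m with
  | zero => cases y <;> simp [cgTerm]
  | succ m =>
    have hq := qchoose_succ_mul (n := n) (m := m) (by omega) (2 * b - y)
    have hp := xic_mul_cgPhase_right n a b x y z m
    rw [if_neg (by omega), ← add_assoc y, Nat.add_sub_cancel, cgTerm_add_add, add_assoc,
      cgTerm_add_add]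
    push_cast
    rw [add_sub_cancel_left, add_sub_cancel_left,
      show 2 * b + 1 - (y + (m + 1)) = 2 * b - y - m by ring]
    linear_combination
      qn n (2 * b - y - m) * qchoose n (2 * a - x) z * qchoose n (2 * b - y) m * hp +
      xic n z * cgPhase n a b x y z (m + 1) * qchoose n (2 * a - x) z * hq

/-- The coordinates of `F^t h`, `t = u + v - k`, for the highest weight vector
`h = Σ_{x+y=k} ± [k¦x] ξ^… e_x ⊗ e_y` of `V^a ⊗ V^b`, up to a factor depending on `t` only. -/
def cgSum (n : ℕ) (a b : ℂ) (k u v : ℕ) : ℂ :=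
  ∑ p ∈ antidiagonal k, qchoose n k p.2 * cgTerm n a b p.1 p.2 u v

lemma cgSum_lower {n u v : ℕ} (hu : u < n) (hv : v < n) (a b : ℂ) (k : ℕ) :
    (if u = 0 then 0 else qn n (2 * a + 1 - u) * (xic n (b - v) * cgSum n a b k (u - 1) v)) +
        xic n (-(a - u)) *
          (if v = 0 then 0 else qn n (2 * b + 1 - v) * cgSum n a b k u (v - 1)) =
      -(qn n (u + v - k) * cgSum n a b k u v) := by
  have hl : (if u = 0 then 0 else
      qn n (2 * a + 1 - u) * (xic n (b - v) * cgSum n a b k (u - 1) v)) =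
      ∑ p ∈ antidiagonal k, qchoose n k p.2 * (if u = 0 then 0 else
        qn n (2 * a + 1 - u) * (xic n (b - v) * cgTerm n a b p.1 p.2 (u - 1) v)) := by
    split_ifs
    · simp
    · simp only [cgSum, Finset.mul_sum]
      exact Finset.sum_congr rfl fun _ _ => by ring
  have hr : xic n (-(a - u)) *
      (if v = 0 then 0 else qn n (2 * b + 1 - v) * cgSum n a b k u (v - 1)) =
      ∑ p ∈ antidiagonal k, qchoose n k p.2 * (xic n (-(a - u)) * (if v = 0 then 0 else
        qn n (2 * b + 1 - v) * cgTerm n a b p.1 p.2 u (v - 1))) := by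
    split_ifs
    · simp
    · simp only [cgSum, Finset.mul_sum]
      exact Finset.sum_congr rfl fun _ _ => by ring
  rw [hl, hr, ← Finset.sum_add_distrib, cgSum, Finset.mul_sum, ← Finset.sum_neg_distrib]
  refine Finset.sum_congr rfl fun p hp => ?_
  have hk : (k : ℂ) = p.1 + p.2 := mod_cast (HasAntidiagonal.mem_antidiagonal.1 hp).symm
  rw [cgTerm_left hu, cgTerm_right hv, hk,
    show (u : ℂ) + v - (p.1 + p.2) = u - p.1 + (v - p.2) by ring, qn_add]
  ring

/-- The phase of the coordinate at `e_u ⊗ e_v` of a highest weight vector of `V^a ⊗ V^b`. -/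
def highestWeightPhase (n : ℕ) (a b : ℂ) (u v : ℕ) : ℂ :=
  (-1) ^ v * xic n (wtExp b v - wtExp a u)

lemma cgSum_add (n : ℕ) (a b : ℂ) (u v : ℕ) :
    cgSum n a b (u + v) u v = qchoose n (u + v : ℕ) v * highestWeightPhase n a b u v := by
  rw [cgSum, Finset.sum_eq_single_of_mem (u, v) (by simp)]
  · simp [cgTerm, cgPhase, qchoose, wtExp, highestWeightPhase]
  · intro p hp hne
    have hk := HasAntidiagonal.mem_antidiagonal.1 hp
    rw [cgTerm, if_neg, mul_zero]
    rintro ⟨h₁, h₂⟩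
    exact hne (Prod.ext (by simp only; omega) (by simp only; omega))

lemma cgSum_raise {n u v : ℕ} (h : u + v + 1 < n) (a b : ℂ) :
    qn n (u + 1) * (xic n (b - v) * cgSum n a b (u + v + 1) (u + 1) v) +
      xic n (-(a - u)) * (qn n (v + 1) * cgSum n a b (u + v + 1) u (v + 1)) = 0 := by
  have hq := qchoose_succ_mul (n := n) (m := v) (by omega) ((u + v + 1 : ℕ) : ℂ)
  have hx : xic n (b - v) * xic n (wtExp b v - wtExp a (u + 1)) =
      xic n (-(a - u)) * xic n (wtExp b (v + 1) - wtExp a u) := by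
    rw [← xic_add, ← xic_add]
    congr 1
    simp only [wtExp]
    ring
  have h₁ := cgSum_add n a b (u + 1) v
  have h₂ := cgSum_add n a b u (v + 1)
  rw [show u + 1 + v = u + v + 1 by ring] at h₁
  rw [← add_assoc] at h₂
  rw [h₁, h₂, highestWeightPhase, highestWeightPhase, pow_succ]
  push_cast at hq ⊢
  rw [show (u : ℂ) + v + 1 - v = u + 1 by ring] at hq
  linear_combination (-1) ^ v * qn n (u + 1) * qchoose n (u + v + 1) v * hx -
    (-1) ^ v * xic n (-(a - u)) * xic n (wtExp b (v + 1) - wtExp a u) * hq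

lemma qbin_natCast_eq_zero {n k : ℕ} {u z : ℕ} (h : ¬(z ≤ u ∧ u ≤ z + k)) :
    qbin n k (u - z) = 0 := by
  by_cases hex : ∃ m : ℕ, m < n ∧ (k : ℂ) - (u - z) = m
  · obtain ⟨m, hm, hkm⟩ := hex
    have hm' : k + z = m + u := by
      have : (k : ℂ) + z = m + u := by linear_combination hkm
      exact_mod_cast this
    rw [qbin_eq_qchoose hm hkm, qchoose, fall_natCast_of_lt n (by omega), zero_div]
  · exact dif_neg hex

lemma CG_sum_eq_cgSum {n k u v t : ℕ} (hk : k < n) (hu : u < n) (hv : v < n)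
    (h : u + v = t + k) {a b c : ℂ} (hc : a + b - c = k) :
    (-1) ^ v * xic n ((v * (2 * b - v + 1) - u * (2 * a - u + 1)) / 2) *
      ∑ z ∈ range (t + 1), (-1 : ℂ) ^ z * xic n ((2 * z - t) * (2 * c - t + 1) / 2) *
        qbin n (a + b - c) (u - z) * qbin n (2 * a - u + z) (2 * a - u) *
        qbin n (2 * b - v + (t - z)) (2 * b - v) = cgSum n a b k u v := by
  obtain rfl : c = a + b - k := by linear_combination -hc
  rw [hc, Finset.mul_sum, ← Finset.sum_filter_of_ne (p := fun z => z ≤ u ∧ u ≤ z + k)]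
  swap
  · intro z _ hne
    by_contra hz
    exact hne (by rw [qbin_natCast_eq_zero hz]; ring)
  simp only [cgSum, cgTerm, mul_ite, mul_zero]
  rw [← Finset.sum_filter]
  refine Finset.sum_bij' (fun z _ => (u - z, k - (u - z))) (fun p _ => u - p.1) ?_ ?_ ?_ ?_ ?_
  any_goals simp only [Finset.mem_filter, Finset.mem_range, HasAntidiagonal.mem_antidiagonal,
    Prod.forall, Prod.mk.injEq]; omega
  intro z hz
  simp only [Finset.mem_filter, Finset.mem_range] at hz
  obtain ⟨x, rfl⟩ := Nat.exists_eq_add_of_le hz.2.1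
  obtain ⟨m, rfl⟩ := Nat.exists_eq_add_of_le (show z ≤ t by omega)
  obtain ⟨y, rfl⟩ := Nat.exists_eq_add_of_le (show x ≤ k by omega)
  obtain rfl : v = y + m := by omega
  rw [qbin_eq_qchoose (m := y) (by omega) (by push_cast; ring),
    qbin_eq_qchoose (m := z) (by omega) (by ring),
    qbin_eq_qchoose (m := m) (by omega) (by push_cast; ring)]
  simp only [Nat.add_sub_cancel_left, Nat.add_sub_cancel, cgPhase]
  rw [show wtExp b (y + m) - wtExp a (x + z) + wtExp (a + b - x - y) z - wtExp (a + b - x - y) m =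
    ((y + m : ℕ) * (2 * b - (y + m : ℕ) + 1) - (z + x : ℕ) * (2 * a - (z + x : ℕ) + 1)) / 2 +
      (2 * z - (z + m : ℕ)) * (2 * (a + b - (x + y : ℕ)) - (z + m : ℕ) + 1) / 2 by
    simp only [wtExp]; push_cast; ring, xic_add]
  push_cast
  ring_nf

/-- The scalar by which `Y_c^{a,b}` differs from the equivariant map sending `e_0` to the highest
weight vector described by `cgSum n a b k`, where `k = a + b - c`. -/
def cgScalar (n : ℕ) (c : ℂ) (k : ℕ) : ℂ :=
  Complex.exp (Real.pi * Complex.I * (-k) / 2) * qchoose n (2 * c) (n - 1 - k)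

lemma CG_eq_cgSum {n k u v t : ℕ} (hk : k < n) (hu : u < n) (hv : v < n) (ht : t < n)
    (h : u + v = t + k) {a b c : ℂ} (hc : a + b - c = k) :
    CG n a b c u v t =
      cgScalar n c k * ((-1) ^ t * (qfac n t / fall n (2 * c) t) * cgSum n a b k u v) := by
  have hsign : (-1 : ℂ) ^ ((v : ℤ) - (t : ℤ)) = (-1) ^ v * (-1) ^ t := by
    rw [zpow_sub₀ (by norm_num), zpow_natCast, zpow_natCast, div_eq_mul_inv, ← inv_pow]
    norm_num
  rw [← CG_sum_eq_cgSum hk hu hv h hc, CG, hsign, qbin_eq_qchoose ht (sub_sub_cancel _ _),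
    qbin_eq_qchoose (m := n - 1 - k) (by omega), qchoose, inv_div, cgScalar,
    show c - a - b = -k by linear_combination -hc]
  · ring
  · rw [Nat.cast_sub (by omega), Nat.cast_pred (by omega)]
    linear_combination -hc

/-- The coordinate of `Y_c^{a,b} e_t` at `e_u ⊗ e_v`, where `k = a + b - c`. -/
def cgCoord (n : ℕ) (a b c : ℂ) (k t u v : ℕ) : ℂ :=
  if u + v = t + k then
    cgScalar n c k * ((-1) ^ t * (qfac n t / fall n (2 * c) t) * cgSum n a b k u v)
  else 0

lemma Yinc_apply {n k : ℕ} (hk : k < n) {a b c : ℂ} (hc : a + b - c = k) (u v t : Fin n) :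
    Yinc n a b c (u, v) t = cgCoord n a b c k t u v := by
  have hiff : ((u : ℕ) : ℂ) + (v : ℕ) - (t : ℕ) = a + b - c ↔ (u : ℕ) + v = t + k := by
    rw [hc, sub_eq_iff_eq_add', ← Nat.cast_add, ← Nat.cast_add, Nat.cast_inj]
  rw [Yinc, Matrix.of_apply, cgCoord]
  simp only [hiff]
  split_ifs with h
  · exact CG_eq_cgSum hk u.isLt v.isLt t.isLt h hc
  · rfl

lemma cgCoord_lower {n u v : ℕ} [NeZero n] (hu : u < n) (hv : v < n) (a b : ℂ) {c : ℂ}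
    (hc : 2 * c ∈ integerComplement) (k t : ℕ) :
    (if u = 0 then 0 else qn n (2 * a + 1 - u) * (xic n (b - v) * cgCoord n a b c k t (u - 1) v)) +
        xic n (-(a - u)) *
          (if v = 0 then 0 else qn n (2 * b + 1 - v) * cgCoord n a b c k t u (v - 1)) =
      qn n (2 * c - t) * cgCoord n a b c k (t + 1) u v := by
  by_cases h : u + v = t + 1 + k
  · have hlow := cgSum_lower hu hv a b k
    have hne := qn_ne_zero (n := n) (sub_natCast_mem_integerComplement hc t)
    have ht : (u : ℂ) + v - k = t + 1 := by
      have : (u : ℂ) + v = t + 1 + k := mod_cast h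
      linear_combination this
    rw [ht] at hlow
    have hR : qn n (2 * c - t) * cgCoord n a b c k (t + 1) u v =
        cgScalar n c k * ((-1) ^ t * (qfac n t / fall n (2 * c) t)) *
          -(qn n (t + 1) * cgSum n a b k u v) := by
      rw [cgCoord, if_pos h, qfac_succ, fall_succ, pow_succ]
      field_simp
    rw [hR, ← hlow, mul_add]
    congr 1
    · split_ifs with h0
      · simp
      · rw [cgCoord, if_pos (by omega)]
        ring
    · split_ifs with h0
      · simp
      · rw [cgCoord, if_pos (by omega)]
        ring
  · rw [cgCoord, cgCoord, cgCoord, if_neg h, mul_zero]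
    split_ifs <;> first | omega | simp

lemma cgCoord_raise {n u v : ℕ} (a b c : ℂ) {k : ℕ} (hk : k < n) :
    qn n (u + 1) * (xic n (b - v) * cgCoord n a b c k 0 (u + 1) v) +
      xic n (-(a - u)) * (qn n (v + 1) * cgCoord n a b c k 0 u (v + 1)) = 0 := by
  by_cases h : u + v + 1 = k
  · subst h
    rw [cgCoord, cgCoord, if_pos (by ring), if_pos (by ring)]
    linear_combination cgScalar n c (u + v + 1) * ((-1) ^ 0 * (qfac n 0 / fall n (2 * c) 0)) *
      cgSum_raise hk a b
  · rw [cgCoord, cgCoord, if_neg (by omega), if_neg (by omega)]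
    simp

lemma kronecker_mul_apply {l m p q ι : Type*} [Fintype m] [Fintype q] (X : Matrix l m ℂ)
    (Y : Matrix p q ℂ) (M : Matrix (m × q) ι ℂ) (i : l) (j : p) (t : ι) :
    (X ⊗ₖ Y * M) (i, j) t = ∑ r, X i r * ∑ s, Y j s * M (r, s) t := by
  simp only [Matrix.mul_apply, Matrix.kroneckerMap_apply, Fintype.sum_prod_type, Finset.mul_sum,
    mul_assoc]

section WeightRepTensor

variable {n : ℕ} {ι : Type*} (a b : ℂ) {M : Matrix (Fin n × Fin n) ι ℂ} {t : ι} {g : ℕ → ℕ → ℂ}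

lemma tensor_E_mul_apply (hM : ∀ i j : Fin n, M (i, j) t = g i j) (u v : Fin n) :
    (((weightRep n a).tensor (weightRep n b)).E * M) (u, v) t =
      qint n (u + 1) * (xic n (b - v) * g (u + 1) v) +
        xic n (-(a - u)) * (qint n (v + 1) * g u (v + 1)) := by
  change ((Emat n ⊗ₖ Kmat n b + Kinvmat n a ⊗ₖ Emat n) * M) (u, v) t = _
  rw [Matrix.add_mul, Matrix.add_apply, kronecker_mul_apply, kronecker_mul_apply]
  simp only [hM, sum_Emat_mul _ (g _), Kmat_eq_diagonal, Kinvmat_eq_diagonal,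
    Matrix.diagonal_apply, ite_mul, zero_mul, Finset.sum_ite_eq, Finset.mem_univ, if_true]
  rw [sum_Emat_mul u fun i => xic n (b - v) * g i v]

lemma tensor_F_mul_apply (hM : ∀ i j : Fin n, M (i, j) t = g i j) (u v : Fin n) :
    (((weightRep n a).tensor (weightRep n b)).F * M) (u, v) t =
      (if (u : ℕ) = 0 then 0 else qint n (2 * a + 1 - u) * (xic n (b - v) * g (u - 1) v)) +
        xic n (-(a - u)) * (if (v : ℕ) = 0 then 0 else qint n (2 * b + 1 - v) * g u (v - 1)) := by
  change ((Fmat n a ⊗ₖ Kmat n b + Kinvmat n a ⊗ₖ Fmat n b) * M) (u, v) t = _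
  rw [Matrix.add_mul, Matrix.add_apply, kronecker_mul_apply, kronecker_mul_apply]
  simp only [hM, sum_Fmat_mul _ _ (g _), Kmat_eq_diagonal, Kinvmat_eq_diagonal,
    Matrix.diagonal_apply, ite_mul, zero_mul, Finset.sum_ite_eq, Finset.mem_univ, if_true]
  rw [sum_Fmat_mul a u fun i => xic n (b - v) * g i v]

lemma tensor_K_mul_apply (u v : Fin n) :
    (((weightRep n a).tensor (weightRep n b)).K * M) (u, v) t =
      xic n (a + b - u - v) * M (u, v) t := by
  change (Kmat n a ⊗ₖ Kmat n b * M) (u, v) t = _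
  rw [kronecker_mul_apply]
  simp only [Kmat_eq_diagonal, Matrix.diagonal_apply, ite_mul, zero_mul, Finset.sum_ite_eq,
    Finset.mem_univ, if_true]
  rw [← mul_assoc, ← xic_add]
  ring_nf

end WeightRepTensor

lemma Yinc_mul_Fmat_apply {n k : ℕ} (hk : k < n) {a b c : ℂ} (hc : a + b - c = k)
    (u v t : Fin n) :
    (Yinc n a b c * Fmat n c) (u, v) t = qint n (2 * c - t) * cgCoord n a b c k (t + 1) u v := by
  have : NeZero n := ⟨by omega⟩
  rcases Nat.lt_or_ge (t + 1) n with ht | ht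
  · rw [mul_comm, ← Yinc_apply hk hc u v ⟨t + 1, ht⟩]
    exact mul_Fmat_apply c (Yinc n a b c) (u, v) ht
  · rw [cgCoord, qfac_eq_zero ht, Matrix.mul_apply]
    simp only [zero_div, mul_zero, zero_mul, ite_self]
    exact Finset.sum_eq_zero fun s _ => by
      rw [Fmat, Matrix.of_apply, if_neg (by omega), mul_zero]

lemma isIntertwiner_Yinc {n k : ℕ} (hk : k < n) {a b c : ℂ} (hc : a + b - c = k)
    (hc' : 2 * c ∈ integerComplement) :
    QuantumRep.IsIntertwiner (weightRep n c) ((weightRep n a).tensor (weightRep n b))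
      (Yinc n a b c) := by
  have : NeZero n := ⟨by omega⟩
  have hY (t i j : Fin n) : Yinc n a b c (i, j) t = cgCoord n a b c k t i j :=
    Yinc_apply hk hc i j t
  refine .of_highestWeight hc' ?_ ?_ ?_
  · ext ⟨u, v⟩ t
    rw [tensor_F_mul_apply a b (hY t), Yinc_mul_Fmat_apply hk hc]
    have hlow := cgCoord_lower u.isLt v.isLt a b hc' k t
    simp only [qint, div_mul_eq_mul_div, ← hlow, add_div, mul_div_assoc, ite_div, zero_div]
  · ext ⟨u, v⟩ t
    rw [tensor_K_mul_apply, Kmat_eq_diagonal, Matrix.mul_diagonal, hY, cgCoord]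
    split_ifs with h
    · have h' : (u : ℂ) + v = t + k := mod_cast h
      rw [mul_comm, show a + b - u - v = c - t by linear_combination hc - h']
    · simp
  · rintro ⟨u, v⟩
    rw [tensor_E_mul_apply a b (hY 0)]
    have hraise := cgCoord_raise (u := u) (v := v) a b c hk
    rw [qint, qint, Fin.val_zero]
    linear_combination hraise / qn n 1

/-! ### The slice `e_u ⊗ e_0 ⊗ e_w` -/

lemma cgSum_zero_right (n : ℕ) (a b : ℂ) (k p : ℕ) :
    cgSum n a b k (k + p) 0 = (-1) ^ p * xic n (wtExp (a + b - k) p - wtExp a (k + p)) *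
      qchoose n (2 * a - k) p := by
  rw [cgSum, Finset.sum_eq_single_of_mem (k, 0) (by simp)]
  · simp [cgTerm, cgPhase, qchoose, wtExp, ← sub_eq_neg_add]
  · intro q hq hne
    have hk := HasAntidiagonal.mem_antidiagonal.1 hq
    rw [cgTerm, if_neg, mul_zero]
    rintro ⟨-, h⟩
    exact hne (Prod.ext (by simp only; omega) (by simp only; omega))

lemma cgSum_zero_left {n j : ℕ} (hj : j < n) (b d : ℂ) (p : ℕ) :
    cgSum n b d j 0 (j + p) = (-1) ^ (j + p) * xic n (wtExp d (j + p) - wtExp (b + d - j) p) *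
      qchoose n (2 * d - j) p := by
  rw [cgSum, Finset.sum_eq_single_of_mem (0, j) (by simp)]
  · simp [cgTerm, cgPhase, qchoose, wtExp, fall_natCast_self, qfac_ne_zero hj]
  · intro q hq hne
    have hk := HasAntidiagonal.mem_antidiagonal.1 hq
    rw [cgTerm, if_neg, mul_zero]
    rintro ⟨h, -⟩
    exact hne (Prod.ext (by simp only; omega) (by simp only; omega))

lemma qfac_div_fall_mul_qchoose {n p : ℕ} (hp : p < n) (x y : ℂ) :
    qfac n p / fall n y p * qchoose n x p = fall n x p / fall n y p := by
  have := qfac_ne_zero hp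
  rw [qchoose]
  field_simp

lemma cgCoord_zero_right {n k p : ℕ} (hp : p < n) {a b c : ℂ} (hc : a + b - c = k) :
    cgCoord n a b c k p (k + p) 0 = cgScalar n c k *
      (xic n (wtExp c p - wtExp a (k + p : ℕ)) * (fall n (2 * a - k) p / fall n (2 * c) p)) := by
  have hsign : (-1 : ℂ) ^ p * (-1) ^ p = 1 := by rw [← mul_pow]; simp
  rw [cgCoord, if_pos (by omega), cgSum_zero_right, ← qfac_div_fall_mul_qchoose hp,
    show a + b - k = c by rw [← hc]; ring]
  push_cast
  linear_combination cgScalar n c k * xic n (wtExp c p - wtExp a (k + p)) *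
    (qfac n p / fall n (2 * c) p * qchoose n (2 * a - k) p) * hsign

lemma cgCoord_zero_left {n j p : ℕ} (hj : j < n) (hp : p < n) {b d f : ℂ} (hf : b + d - f = j) :
    cgCoord n b d f j p 0 (j + p) = cgScalar n f j *
      ((-1) ^ j * xic n (wtExp d (j + p : ℕ) - wtExp f p) *
        (fall n (2 * d - j) p / fall n (2 * f) p)) := by
  have hsign : (-1 : ℂ) ^ p * (-1) ^ p = 1 := by rw [← mul_pow]; simp
  rw [cgCoord, if_pos (by omega), cgSum_zero_left hj, ← qfac_div_fall_mul_qchoose hp, pow_add,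
    show b + d - j = f by rw [← hf]; ring]
  push_cast
  linear_combination cgScalar n f j * (-1) ^ j * xic n (wtExp d (j + p) - wtExp f p) *
    (qfac n p / fall n (2 * f) p * qchoose n (2 * d - j) p) * hsign

lemma cgCoord_highestWeight (n : ℕ) (a b c : ℂ) (u v : ℕ) :
    cgCoord n a b c (u + v) 0 u v =
      cgScalar n c (u + v) * (qchoose n (u + v : ℕ) v * highestWeightPhase n a b u v) := by
  simp [cgCoord, cgSum_add]

lemma xic_mul_highestWeightPhase (n : ℕ) (a d e : ℂ) (u p w : ℕ) :
    xic n (wtExp e p - wtExp a u) * highestWeightPhase n e d p w =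
      highestWeightPhase n a d u w := by
  rw [highestWeightPhase, highestWeightPhase, mul_left_comm, ← xic_add]
  ring_nf

lemma neg_one_pow_mul_xic_mul_highestWeightPhase (n : ℕ) (a d f : ℂ) (u j p : ℕ) :
    (-1) ^ j * xic n (wtExp d (j + p : ℕ) - wtExp f p) * highestWeightPhase n a f u p =
      highestWeightPhase n a d u (j + p) := by
  rw [highestWeightPhase, highestWeightPhase, mul_mul_mul_comm, ← pow_add, ← xic_add]
  ring_nf

lemma tensL_mul_apply {n : ℕ} (A B : Matrix (Fin n × Fin n) (Fin n) ℂ) (u v w t : Fin n) :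
    (tensL n A * B) (u, v, w) t = ∑ r, A (u, v) r * B (r, w) t := by
  simp [Matrix.mul_apply, Fintype.sum_prod_type, tensL]

lemma tensR_mul_apply {n : ℕ} (A B : Matrix (Fin n × Fin n) (Fin n) ℂ) (u v w t : Fin n) :
    (tensR n A * B) (u, v, w) t = ∑ s, A (v, w) s * B (u, s) t := by
  simp [Matrix.mul_apply, Fintype.sum_prod_type, tensR]

section Slice

variable {n k₁ k₂ k₃ j : ℕ} [NeZero n] {a b c d e f : ℂ} (u w : Fin n)

lemma tensL_mul_Yinc_apply (h₁ : k₁ < n) (h₂ : k₂ < n) (habe : a + b - e = k₁)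
    (hedc : e + d - c = k₂) :
    (tensL n (Yinc n a b e) * Yinc n e d c) (u, 0, w) 0 =
      if (u : ℕ) + w = k₁ + k₂ then
        cgScalar n e k₁ * cgScalar n c k₂ * highestWeightPhase n a d u w *
          (fall n (2 * a - k₁) (k₂ - w) / fall n (2 * e) (k₂ - w) * qchoose n k₂ w)
      else 0 := by
  rw [tensL_mul_apply]
  simp only [Yinc_apply h₁ habe, Yinc_apply h₂ hedc, Fin.val_zero]
  by_cases h : (u : ℕ) + w = k₁ + k₂ ∧ (w : ℕ) ≤ k₂
  · obtain ⟨p, rfl⟩ := Nat.exists_eq_add_of_le' h.2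
    have hp : p < n := by omega
    rw [if_pos h.1, Finset.sum_eq_single_of_mem ⟨p, hp⟩ (mem_univ _),
      show (u : ℕ) = k₁ + p by omega, cgCoord_zero_right hp habe, cgCoord_highestWeight,
      Nat.add_sub_cancel, ← xic_mul_highestWeightPhase n a d e (k₁ + p) p w]
    · ring
    · intro r _ hr
      have : (r : ℕ) ≠ p := fun hrp => hr (Fin.ext hrp)
      rw [cgCoord, cgCoord, if_neg (c := (r : ℕ) + w = _) (by omega), mul_zero]
  · have hR : (u : ℕ) + w = k₁ + k₂ → qchoose n k₂ w = 0 := fun huw => by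
      rw [qchoose, fall_natCast_of_lt n (by omega), zero_div]
    rw [Finset.sum_eq_zero fun r _ => ?_]
    · split_ifs with huw
      · rw [hR huw, mul_zero, mul_zero]
      · rfl
    · rw [cgCoord, cgCoord]
      split_ifs <;> first | omega | simp

lemma tensR_mul_Yinc_apply (hj : j < n) (h₃ : k₃ < n) (hbdf : b + d - f = j)
    (hafc : a + f - c = k₃) :
    (tensR n (Yinc n b d f) * Yinc n a f c) (u, 0, w) 0 =
      if (u : ℕ) + w = j + k₃ ∧ j ≤ (w : ℕ) then
        cgScalar n f j * cgScalar n c k₃ * highestWeightPhase n a d u w *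
          (fall n (2 * d - j) (w - j) / fall n (2 * f) (w - j) * qchoose n k₃ (w - j))
      else 0 := by
  rw [tensR_mul_apply]
  simp only [Yinc_apply hj hbdf, Yinc_apply h₃ hafc, Fin.val_zero]
  split_ifs with h
  · obtain ⟨p, hw⟩ := Nat.exists_eq_add_of_le h.2
    obtain rfl : k₃ = u + p := by omega
    have hp : p < n := by omega
    rw [Finset.sum_eq_single_of_mem ⟨p, hp⟩ (mem_univ _), hw, cgCoord_zero_left hj hp hbdf,
      cgCoord_highestWeight, Nat.add_sub_cancel_left,
      ← neg_one_pow_mul_xic_mul_highestWeightPhase n a d f u j p]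
    · ring
    · intro s _ hs
      have : (s : ℕ) ≠ p := fun hsp => hs (Fin.ext hsp)
      rw [cgCoord, if_neg (by omega), zero_mul]
  · refine Finset.sum_eq_zero fun s _ => ?_
    rw [cgCoord, cgCoord]
    split_ifs <;> first | omega | simp

end Slice

lemma qchoose_natCast_add_mul_qfac (n u m : ℕ) :
    qchoose n (u + m : ℕ) m * qfac n u = qfac n (u + m) / qfac n m := by
  rw [← fall_natCast_mul_qfac, qchoose, div_mul_eq_mul_div]

lemma sum_racahSum_mul_qchoose {n u w k₁ k₂ : ℕ} [NeZero n] (hu : u < n) (hw : w < n)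
    (huw : u + w = k₁ + k₂) {l β δ : ℂ} (hX : β + δ ∈ integerComplement)
    (hl : l + β - k₁ ∈ integerComplement) :
    ∑ p ∈ antidiagonal w, (-1) ^ p.1 * racahSum n k₂ p.1 k₁ l β δ / fall n (β + δ + 1 - p.1) p.1 *
        (fall n (δ - p.1) p.2 / fall n (β + δ - 2 * p.1) p.2 *
          qchoose n (k₁ + k₂ - p.1 : ℕ) p.2) =
      fall n (l + β - k₁) k₂ *
        (fall n l (k₂ - w) / fall n (l + β - k₁) (k₂ - w) * qchoose n k₂ w) := by
  refine mul_right_cancel₀ (qfac_ne_zero hu) ?_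
  calc
    _ = poisedCoeff n k₁ k₂ w 0 l β δ := by
      rw [← sum_qfac_mul_racahSum hw (by omega) l hX, Finset.sum_mul]
      refine Finset.sum_congr rfl fun ⟨j, s⟩ hp => ?_
      obtain rfl : j + s = w := HasAntidiagonal.mem_antidiagonal.1 hp
      have hne : qn n (β + δ + 1 - j * 2) ≠ 0 := qn_ne_zero <| by
        simpa using
          sub_natCast_mem_integerComplement (add_natCast_mem_integerComplement hX 1) (j * 2)
      have hq := qchoose_natCast_add_mul_qfac n u s
      have hfall : fall n (β + δ + 1 - j) (j + s + 1) = fall n (β + δ + 1 - j) j *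
          (qn n (β + δ + 1 - j * 2) * fall n (β + δ - 2 * j) s) := by
        rw [add_assoc j, fall_add, fall_succ']
        ring_nf
      rw [show k₁ + k₂ - j = u + s by omega, hfall, mul_assoc, mul_assoc, hq]
      field_simp
    _ = _ := by
      rcases le_or_gt w k₂ with h | h
      · have hY : l + β - k₁ - k₂ + w = l + β - k₁ - (k₂ - w : ℕ) := by
          push_cast [h]
          ring
        have hne := fall_ne_zero (n := n) hl (k₂ - w)
        have hsplit := fall_add n (l + β - k₁) (k₂ - w) w
        rw [Nat.sub_add_cancel h] at hsplit
        rw [poisedCoeff, hY, hsplit, fall_zero, qchoose, show k₁ + k₂ - w = u by omega]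
        field_simp
      · rw [poisedCoeff, qchoose, fall_natCast_of_lt n h]
        simp

lemma cgScalar_mul_cgScalar (n i k : ℕ) (x y : ℂ) :
    cgScalar n x i * cgScalar n y k = Complex.exp (Real.pi * Complex.I * (-(i + k : ℕ)) / 2) *
      (qchoose n (2 * x) (n - 1 - i) * qchoose n (2 * y) (n - 1 - k)) := by
  rw [cgScalar, cgScalar, mul_mul_mul_comm, ← Complex.exp_add]
  push_cast
  ring_nf

lemma sixj_mul_cgScalar_mul_cgScalar {n k₁ k₂ k₃ j : ℕ} (h₁ : k₁ < n) (h₂ : k₂ < n) (h₃ : k₃ < n)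
    (hj : j < n) (hsum : j + k₃ = k₁ + k₂) {a b c d e f : ℂ} (habe : a + b - e = k₁)
    (hdec : d + e - c = k₂) (hbdf : b + d - f = j) (hc : 2 * c ∈ integerComplement)
    (hf : 2 * f ∈ integerComplement) :
    sixj n a b e d c f * (cgScalar n f j * cgScalar n c k₃) =
      cgScalar n e k₁ * cgScalar n c k₂ *
        ((-1) ^ j * racahSum n k₂ j k₁ (2 * a - k₁) (2 * b) (2 * d) /
          (fall n (2 * e) k₂ * fall n (2 * f + 1 + j) j)) := by
  rw [cgScalar_mul_cgScalar, cgScalar_mul_cgScalar, hsum, mul_left_comm,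
    sixj_mul_qchoose_mul_qchoose h₁ h₂ h₃ hj hsum habe hdec hbdf hc hf]
  ring

open Classical in
/-- The summand of the recoupling identity attached to the intermediate weight `f`. -/
def recouplingTerm (n : ℕ) (a b c d e f : ℂ) : Matrix (Fin n × Fin n × Fin n) (Fin n) ℂ :=
  if InZn n (a + f - c) then sixj n a b e d c f • (tensR n (Yinc n b d f) * Yinc n a f c) else 0

section Slice

variable {n k₁ k₂ j : ℕ} [NeZero n] {a b c d e f : ℂ} (u w : Fin n)

lemma natCast_add_eq_natCast_add {k₃ : ℕ} (habe : a + b - e = k₁) (hdec : d + e - c = k₂)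
    (hbdf : b + d - f = j) (hafc : a + f - c = k₃) : j + k₃ = k₁ + k₂ := by
  have : (j : ℂ) + k₃ = k₁ + k₂ := by linear_combination habe + hdec - hbdf - hafc
  exact_mod_cast this

lemma recouplingTerm_apply_eq_zero (hj : j < n) (habe : a + b - e = k₁) (hdec : d + e - c = k₂)
    (hbdf : b + d - f = j) (h : ¬((u : ℕ) + w = k₁ + k₂ ∧ j ≤ (w : ℕ))) :
    recouplingTerm n a b c d e f (u, 0, w) 0 = 0 := by
  rw [recouplingTerm]
  split_ifs with hin
  · obtain ⟨k₃, h₃, hafc⟩ := hin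
    rw [Matrix.smul_apply, tensR_mul_Yinc_apply u w hj h₃ hbdf hafc,
      natCast_add_eq_natCast_add habe hdec hbdf hafc, if_neg h, smul_zero]
  · rfl

lemma fall_mul_recouplingTerm_apply (h₁ : k₁ < n) (h₂ : k₂ < n) (habe : a + b - e = k₁)
    (hdec : d + e - c = k₂) (hbdf : b + d - f = j) (hc : 2 * c ∈ integerComplement)
    (he : 2 * e ∈ integerComplement) (hbd : 2 * b + 2 * d ∈ integerComplement)
    (huw : (u : ℕ) + w = k₁ + k₂) (hjw : j ≤ (w : ℕ)) :
    fall n (2 * e) k₂ * recouplingTerm n a b c d e f (u, 0, w) 0 =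
      cgScalar n e k₁ * cgScalar n c k₂ * highestWeightPhase n a d u w *
        ((-1) ^ j * racahSum n k₂ j k₁ (2 * a - k₁) (2 * b) (2 * d) /
          fall n (2 * b + 2 * d + 1 - j) j * (fall n (2 * d - j) (w - j) /
            fall n (2 * b + 2 * d - 2 * j) (w - j) * qchoose n (k₁ + k₂ - j : ℕ) (w - j))) := by
  rw [recouplingTerm]
  split_ifs with hin
  · obtain ⟨k₃, h₃, hafc⟩ := hin
    have hsum := natCast_add_eq_natCast_add habe hdec hbdf hafc
    have hf : 2 * f = 2 * b + 2 * d - 2 * j := by linear_combination -2 * hbdf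
    have hf' : 2 * f ∈ integerComplement := by
      simpa [hf] using sub_natCast_mem_integerComplement hbd (2 * j)
    have hj : j < n := hjw.trans_lt w.isLt
    have hne := fall_ne_zero (n := n) he k₂
    rw [Matrix.smul_apply, smul_eq_mul, tensR_mul_Yinc_apply u w hj h₃ hbdf hafc,
      if_pos ⟨huw.trans hsum.symm, hjw⟩, mul_assoc (cgScalar n f j * cgScalar n c k₃),
      ← mul_assoc (sixj n a b e d c f),
      sixj_mul_cgScalar_mul_cgScalar h₁ h₂ h₃ hj hsum habe hdec hbdf hc hf', hf,
      show k₁ + k₂ - j = k₃ by omega,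
      show 2 * b + 2 * d - 2 * (j : ℂ) + 1 + j = 2 * b + 2 * d + 1 - j by ring]
    field_simp
  · have hn : n ≤ u + (w - j) := by
      by_contra! hlt
      refine hin ⟨u + (w - j), hlt, ?_⟩
      have : (u : ℂ) + w = k₁ + k₂ := by exact_mod_cast huw
      push_cast [hjw]
      linear_combination habe + hdec - hbdf - this
    have hq : qchoose n (k₁ + k₂ - j : ℕ) (w - j) = 0 := by
      have := qchoose_natCast_add_mul_qfac n u (w - j)
      rw [qfac_eq_zero hn, zero_div] at this
      rw [show k₁ + k₂ - j = u + (w - j) by omega]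
      exact (mul_eq_zero.1 this).resolve_right (qfac_ne_zero u.isLt)
    rw [hq, Matrix.zero_apply]
    ring

theorem tensL_mul_Yinc_apply_eq_sum (h₁ : k₁ < n) (h₂ : k₂ < n) (habe : a + b - e = k₁)
    (hdec : d + e - c = k₂) (hc : 2 * c ∈ integerComplement) (he : 2 * e ∈ integerComplement)
    (hbd : 2 * b + 2 * d ∈ integerComplement) :
    (tensL n (Yinc n a b e) * Yinc n e d c) (u, 0, w) 0 =
      ∑ j ∈ range n, recouplingTerm n a b c d e (b + d - j) (u, 0, w) 0 := by
  have hedc : e + d - c = k₂ := by rw [add_comm e, hdec]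
  rw [tensL_mul_Yinc_apply u w h₁ h₂ habe hedc]
  by_cases huw : (u : ℕ) + w = k₁ + k₂
  · have h2e : 2 * e = 2 * a - k₁ + 2 * b - k₁ := by linear_combination -2 * habe
    rw [if_pos huw, ← Finset.sum_subset (range_subset_range.2 w.isLt) fun j hj hjw =>
        recouplingTerm_apply_eq_zero u w (mem_range.1 hj) habe hdec (sub_sub_cancel _ _)
          fun h => hjw (mem_range.2 (Nat.lt_succ_of_le h.2))]
    refine mul_left_cancel₀ (fall_ne_zero (n := n) he k₂) ?_
    rw [Finset.mul_sum, Finset.sum_congr rfl fun j hj =>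
      fall_mul_recouplingTerm_apply u w h₁ h₂ habe hdec (sub_sub_cancel _ _) hc he hbd huw
        (Nat.le_of_lt_succ (mem_range.1 hj)), ← Finset.mul_sum,
      ← Finset.Nat.sum_antidiagonal_eq_sum_range_succ fun j s =>
        (-1) ^ j * racahSum n k₂ j k₁ (2 * a - k₁) (2 * b) (2 * d) /
          fall n (2 * b + 2 * d + 1 - j) j * (fall n (2 * d - j) s /
            fall n (2 * b + 2 * d - 2 * j) s * qchoose n (k₁ + k₂ - j : ℕ) s),
      sum_racahSum_mul_qchoose u.isLt w.isLt huw hbd (h2e ▸ he), ← h2e]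
    ring
  · rw [if_neg huw, Finset.sum_eq_zero fun j hj =>
      recouplingTerm_apply_eq_zero u w (mem_range.1 hj) habe hdec (sub_sub_cancel _ _)
        fun h => huw h.1]

end Slice

section Uniqueness

variable {n : ℕ} {a b c d : ℂ}

lemma tensor_E_apply_of_ne {u v w u' v' w' : Fin n} (hv : v' ≠ v) :
    ((weightRep n a).tensor ((weightRep n b).tensor (weightRep n d))).E (u, v, w) (u', v', w') =
      Kinvmat n a u u' * (Emat n v v' * Kmat n d w w') := by
  simp [QuantumRep.tensor, weightRep, Kmat, Kinvmat, hv.symm]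

lemma apply_middle_succ_eq_zero {M : Matrix (Fin n × Fin n × Fin n) (Fin n) ℂ} {t u w : Fin n}
    {v : ℕ} (hv : v + 1 < n)
    (hE : (((weightRep n a).tensor ((weightRep n b).tensor (weightRep n d))).E * M)
      (u, ⟨v, v.lt_succ_self.trans hv⟩, w) t = 0)
    (hM : ∀ u w, M (u, ⟨v, v.lt_succ_self.trans hv⟩, w) t = 0) :
    M (u, ⟨v + 1, hv⟩, w) t = 0 := by
  rw [Matrix.mul_apply, Finset.sum_eq_single_of_mem (u, ⟨v + 1, hv⟩, w) (mem_univ _)] at hE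
  · refine (mul_eq_zero.1 hE).resolve_left ?_
    have hq : qint n (v + 1) ≠ 0 := div_ne_zero (qn_natCast_add_one_ne_zero hv) <| by
      simpa using qn_natCast_add_one_ne_zero (n := n) (m := 0) (by omega)
    rw [tensor_E_apply_of_ne (by simp)]
    simpa [Kmat, Kinvmat, Emat, xic] using hq
  · rintro ⟨u', v', w'⟩ - hne
    rcases eq_or_ne v' ⟨v, v.lt_succ_self.trans hv⟩ with rfl | hv'
    · rw [hM, mul_zero]
    · rw [tensor_E_apply_of_ne hv']
      simp only [Kinvmat, Emat, Kmat, Matrix.of_apply]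
      split_ifs with hu hv'' hw
      · exact absurd (Prod.ext hu.symm (Prod.ext (Fin.ext hv'') hw.symm)) hne
      all_goals simp

theorem QuantumRep.IsIntertwiner.eq_zero_of_middle_zero [NeZero n]
    (hc : 2 * c ∈ integerComplement) {M : Matrix (Fin n × Fin n × Fin n) (Fin n) ℂ}
    (hM : IsIntertwiner (weightRep n c)
      ((weightRep n a).tensor ((weightRep n b).tensor (weightRep n d))) M)
    (h0 : ∀ u w, M (u, 0, w) 0 = 0) : M = 0 := by
  have hE (p) : (((weightRep n a).tensor ((weightRep n b).tensor (weightRep n d))).E * M) p 0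
      = 0 := by
    rw [hM.E_mul, Matrix.mul_apply]
    exact Finset.sum_eq_zero fun k _ => by simp [weightRep, Emat]
  have hcol (v : ℕ) (hv : v < n) : ∀ u w, M (u, ⟨v, hv⟩, w) 0 = 0 := by
    induction v with
    | zero => exact h0
    | succ v ih => exact fun u w => apply_middle_succ_eq_zero hv (hE _) (ih _)
  exact eq_zero_of_mul_eq_mul_Fmat hc hM.F_mul fun p => hcol p.2.1 p.2.1.isLt p.1 p.2.2

end Uniqueness

lemma isIntertwiner_recouplingTerm {n j : ℕ} [NeZero n] {a b c d e f : ℂ} (hj : j < n)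
    (hbdf : b + d - f = j) (hc : 2 * c ∈ integerComplement) (hf : 2 * f ∈ integerComplement) :
    QuantumRep.IsIntertwiner (weightRep n c)
      ((weightRep n a).tensor ((weightRep n b).tensor (weightRep n d)))
      (recouplingTerm n a b c d e f) := by
  rw [recouplingTerm]
  split_ifs with hin
  · obtain ⟨k, hk, hafc⟩ := hin
    exact ((isIntertwiner_Yinc hj hbdf hf).tensR.mul (isIntertwiner_Yinc hk hafc hc)).smul _
  · exact .zero

open Classical in
theorem sixj_defining_relation_general (n : ℕ) [NeZero n] (a b c d e : ℂ) (hc : NotHalfInt c)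
    (he : NotHalfInt e) (hbd : NotHalfInt (b + d)) (habe : InZn n (a + b - e))
    (hdec : InZn n (d + e - c)) :
    tensL n (Yinc n a b e) * Yinc n e d c =
      ∑ j ∈ Finset.range n,
        if InZn n (a + (b + d - (j : ℂ)) - c) then
          sixj n a b e d c (b + d - (j : ℂ)) •
            (tensR n (Yinc n b d (b + d - (j : ℂ))) * Yinc n a (b + d - (j : ℂ)) c)
        else 0 := by
  change _ = ∑ j ∈ Finset.range n, recouplingTerm n a b c d e (b + d - j)
  obtain ⟨k₁, h₁, habe⟩ := habe
  obtain ⟨k₂, h₂, hdec⟩ := hdec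
  have hc := hc.two_mul_mem_integerComplement
  have he := he.two_mul_mem_integerComplement
  have hbd := hbd.two_mul_mem_integerComplement
  have hf (j : ℕ) : 2 * (b + d - j) ∈ integerComplement := by
    simpa [mul_sub] using sub_natCast_mem_integerComplement hbd (2 * j)
  have hL := (isIntertwiner_Yinc h₁ habe he).tensL.mul
    (isIntertwiner_Yinc h₂ (add_comm e d ▸ hdec) hc)
  have hR := Finset.sum_induction (s := range n)
    (fun j : ℕ => recouplingTerm n a b c d e (b + d - j)) _
    (fun _ _ => QuantumRep.IsIntertwiner.add) .zero
    fun j hj => isIntertwiner_recouplingTerm (mem_range.1 hj) (sub_sub_cancel _ _) hc (hf j)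
  refine sub_eq_zero.1 ((hL.sub hR).eq_zero_of_middle_zero hc fun u w => ?_)
  rw [Matrix.sub_apply, Matrix.sum_apply, sub_eq_zero]
  exact tensL_mul_Yinc_apply_eq_sum u w h₁ h₂ habe hdec hc he (mul_add 2 b d ▸ hbd)

open Classical in
theorem sixj_defining_relation (n : ℕ) (hn : 2 ≤ n) (a b c d e : ℂ)
    (ha : NotHalfInt a) (hb : NotHalfInt b) (hc : NotHalfInt c) (hd : NotHalfInt d)
    (he : NotHalfInt e) (hbd : NotHalfInt (b + d))
    (habe : InZn n (a + b - e)) (hdec : InZn n (d + e - c)) :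
    tensL n (Yinc n a b e) * Yinc n e d c
      = ∑ j ∈ Finset.range n,
          if InZn n (a + (b + d - (j : ℂ)) - c) then
            sixj n a b e d c (b + d - (j : ℂ)) •
              (tensR n (Yinc n b d (b + d - (j : ℂ))) * Yinc n a (b + d - (j : ℂ)) c)
          else 0 := by
  have : NeZero n := ⟨by omega⟩
  exact sixj_defining_relation_general n a b c d e hc he hbd habe hdec

end
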